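/- There exists a simple H-submodule of ℂP with lower endpoint (ν, μ) and index ρ if and only if 0 ≤ ν ≤ a, 0 ≤ μ ≤ b, and max{0, 2μ − b} ≤ ρ ≤ min{a − 2ν, μ}. -/

import Mathlib

open Module

/-- The q-Pochhammer symbol `(q;q)_n = ∏_{ℓ=0}^{n-1} (1 - q^ℓ)`. -/
noncomputable def qPoch (q : ℂ) (n : ℕ) : ℂ := ∏ l ∈ Finset.range n, (1 - q ^ l)

/-- The q-Pochhammer symbol with an integer index (junk value for negative index). -/
noncomputable def qPochZ (q : ℂ) (n : ℤ) : ℂ := qPoch q n.toNat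

/-- The Gaussian binomial coefficient `[m, n]_q`, with the convention that it
vanishes unless `0 ≤ n ≤ m`. -/
noncomputable def qGauss (q : ℂ) (m n : ℤ) : ℂ :=
  if 0 ≤ n ∧ n ≤ m then qPoch q m.toNat / (qPoch q n.toNat * qPoch q (m - n).toNat) else 0

/-- A subspace `W ≤ ℂ^ι` is stable under a subalgebra of matrices. -/
def MatStable {ι : Type} [Fintype ι] [DecidableEq ι] (Hg : Subalgebra ℂ (Matrix ι ι ℂ))
    (W : Submodule ℂ (ι → ℂ)) : Prop :=
  ∀ M ∈ Hg, W.map (Matrix.mulVecLin M) ≤ W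

/-- `W` is a simple (irreducible) module of a subalgebra of matrices:
it is stable, nonzero, and has no nontrivial stable subspaces. -/
def MatSimple {ι : Type} [Fintype ι] [DecidableEq ι] (Hg : Subalgebra ℂ (Matrix ι ι ℂ))
    (W : Submodule ℂ (ι → ℂ)) : Prop :=
  MatStable Hg W ∧ W ≠ ⊥ ∧
    ∀ U : Submodule ℂ (ι → ℂ), U ≤ W → MatStable Hg U → U = ⊥ ∨ U = W

/-- Two subspaces of `ℂ^ι` are isomorphic as modules of a subalgebra of matrices. -/
def MatIso {ι : Type} [Fintype ι] [DecidableEq ι] (Hg : Subalgebra ℂ (Matrix ι ι ℂ))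
    (W W' : Submodule ℂ (ι → ℂ)) : Prop :=
  ∃ φ : W ≃ₗ[ℂ] W', ∀ M ∈ Hg, ∀ v : ι → ℂ, ∀ hv : v ∈ W, ∀ hMv : M.mulVec v ∈ W,
    (φ ⟨M.mulVec v, hMv⟩ : ι → ℂ) = M.mulVec (φ ⟨v, hv⟩ : ι → ℂ)

/-- The space of `Hg`-equivariant linear maps `W → ℂ^ι`; its dimension is the
multiplicity of `W` in `ℂ^ι` when `W` is simple. -/
noncomputable def MatHom {ι : Type} [Fintype ι] [DecidableEq ι] (Hg : Subalgebra ℂ (Matrix ι ι ℂ))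
    (W : Submodule ℂ (ι → ℂ)) : Submodule ℂ (W →ₗ[ℂ] (ι → ℂ)) where
  carrier := {φ | ∀ M ∈ Hg, ∀ v : ι → ℂ, ∀ hv : v ∈ W, ∀ hMv : M.mulVec v ∈ W,
    φ ⟨M.mulVec v, hMv⟩ = M.mulVec (φ ⟨v, hv⟩)}
  zero_mem' := by
    intro M _ v hv hMv
    simp [Matrix.mulVec_zero]
  add_mem' := by
    intro φ ψ hφ hψ M hM v hv hMv
    simp [hφ M hM v hv hMv, hψ M hM v hv hMv, Matrix.mulVec_add]
  smul_mem' := by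
    intro c φ hφ M hM v hv hMv
    simp [hφ M hM v hv hMv, Matrix.mulVec_smul]

section Untwisted

variable (F : Type) [Field F] [Fintype F] (a b : ℕ)

open Classical in
/-- The diagonal matrix `E*_{i,j}` (with respect to `x`), indexed by the
subspaces of `(F_q)^{a+b}`. -/
noncomputable def Estar (x : Submodule F (Fin (a + b) → F)) (i j : ℤ) :
    Matrix (Submodule F (Fin (a + b) → F)) (Submodule F (Fin (a + b) → F)) ℂ :=
  Matrix.diagonal fun y =>
    if (finrank F ↥(x ⊓ y) : ℤ) = i ∧ (finrank F y : ℤ) = i + j then 1 else 0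

open Classical in
/-- The lowering matrix `L₁`: entry `(y,z)` is `1` iff `z ∈ P_{i,j}`,
`y ∈ P_{i-1,j}` and `y ⊂ z`. -/
noncomputable def Lone (x : Submodule F (Fin (a + b) → F)) :
    Matrix (Submodule F (Fin (a + b) → F)) (Submodule F (Fin (a + b) → F)) ℂ :=
  fun y z => if y ≤ z ∧ finrank F y + 1 = finrank F z ∧
    finrank F ↥(x ⊓ y) + 1 = finrank F ↥(x ⊓ z) then 1 else 0

open Classical in
/-- The lowering matrix `L₂`: entry `(y,z)` is `1` iff `z ∈ P_{i,j}`,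
`y ∈ P_{i,j-1}` and `y ⊂ z`. -/
noncomputable def Ltwo (x : Submodule F (Fin (a + b) → F)) :
    Matrix (Submodule F (Fin (a + b) → F)) (Submodule F (Fin (a + b) → F)) ℂ :=
  fun y z => if y ≤ z ∧ finrank F y + 1 = finrank F z ∧
    finrank F ↥(x ⊓ y) = finrank F ↥(x ⊓ z) then 1 else 0

open Classical in
/-- The raising matrix `R₁`: entry `(y,z)` is `1` iff `z ∈ P_{i,j}`,
`y ∈ P_{i+1,j}` and `y ⊃ z`. -/
noncomputable def Rone (x : Submodule F (Fin (a + b) → F)) :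
    Matrix (Submodule F (Fin (a + b) → F)) (Submodule F (Fin (a + b) → F)) ℂ :=
  fun y z => if z ≤ y ∧ finrank F z + 1 = finrank F y ∧
    finrank F ↥(x ⊓ z) + 1 = finrank F ↥(x ⊓ y) then 1 else 0

open Classical in
/-- The raising matrix `R₂`: entry `(y,z)` is `1` iff `z ∈ P_{i,j}`,
`y ∈ P_{i,j+1}` and `y ⊃ z`. -/
noncomputable def Rtwo (x : Submodule F (Fin (a + b) → F)) :
    Matrix (Submodule F (Fin (a + b) → F)) (Submodule F (Fin (a + b) → F)) ℂ :=
  fun y z => if z ≤ y ∧ finrank F z + 1 = finrank F y ∧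
    finrank F ↥(x ⊓ z) = finrank F ↥(x ⊓ y) then 1 else 0

open Classical in
/-- The algebra `H` generated by `L₁, L₂, R₁, R₂` and the `E*_{i,j}`. -/
noncomputable def Halg (x : Submodule F (Fin (a + b) → F)) :
    Subalgebra ℂ (Matrix (Submodule F (Fin (a + b) → F)) (Submodule F (Fin (a + b) → F)) ℂ) :=
  Algebra.adjoin ℂ
    ({Lone F a b x, Ltwo F a b x, Rone F a b x, Rtwo F a b x} ∪
      {M | ∃ i : ℕ, i ≤ a ∧ ∃ j : ℕ, j ≤ b ∧ M = Estar F a b x i j})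

open Classical in
/-- The quantity `ν` of the lower endpoint of `W`. -/
noncomputable def lowNu (x : Submodule F (Fin (a + b) → F))
    (W : Submodule ℂ (Submodule F (Fin (a + b) → F) → ℂ)) : ℕ :=
  sInf {i : ℕ | W.map (∑ j ∈ Finset.range (b + 1), Estar F a b x i j).mulVecLin ≠ ⊥}

open Classical in
/-- The quantity `ν'` of the upper endpoint of `W`. -/
noncomputable def upNu (x : Submodule F (Fin (a + b) → F))
    (W : Submodule ℂ (Submodule F (Fin (a + b) → F) → ℂ)) : ℕ :=
  sSup {i : ℕ | W.map (∑ j ∈ Finset.range (b + 1), Estar F a b x i j).mulVecLin ≠ ⊥}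

open Classical in
/-- The quantity `μ` of the lower endpoint of `W`. -/
noncomputable def lowMu (x : Submodule F (Fin (a + b) → F))
    (W : Submodule ℂ (Submodule F (Fin (a + b) → F) → ℂ)) : ℕ :=
  sInf {j : ℕ | W.map (∑ i ∈ Finset.range (a + 1), Estar F a b x i j).mulVecLin ≠ ⊥}

open Classical in
/-- The index `ρ = a - ν - ν'` of `W`. -/
noncomputable def idxH (x : Submodule F (Fin (a + b) → F))
    (W : Submodule ℂ (Submodule F (Fin (a + b) → F) → ℂ)) : ℤ :=
  (a : ℤ) - lowNu F a b x W - upNu F a b x W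

end Untwisted

set_option linter.all false
set_option linter.unusedSectionVars false
set_option linter.style.haveILetI false
set_option linter.unusedVariables false
set_option linter.unusedSimpArgs false

section Counting

variable {F : Type} [Field F] [Fintype F] {V : Type} [AddCommGroup V] [Module F V]
  [FiniteDimensional F V]

lemma hm_q_gt : 1 < Fintype.card F := Fintype.one_lt_card

lemma hm_ncard_sub (y : Submodule F V) : (y : Set V).ncard = Fintype.card F ^ finrank F y := by
  classical
  have : Finite V := Module.finite_of_finite F
  have : Fintype y := Fintype.ofFinite _
  rw [← Nat.card_coe_set_eq]
  have := Module.card_eq_pow_finrank (K := F) (V := y)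
  rw [← this, ← Nat.card_eq_fintype_card]; rfl

lemma hm_finrank_sup_span {y : Submodule F V} {v : V} (hv : v ∉ y) :
    finrank F ↥(y ⊔ Submodule.span F {v}) = finrank F y + 1 := by
  have h0 : v ≠ 0 := fun h => hv (h ▸ y.zero_mem)
  have h1 := Submodule.finrank_sup_add_finrank_inf_eq y (Submodule.span F {v})
  have h2 : y ⊓ Submodule.span F {v} = ⊥ := by
    rw [← disjoint_iff, Submodule.disjoint_span_singleton' h0]; exact hv
  rw [h2, finrank_bot, finrank_span_singleton h0] at h1
  omega

lemma hm_count_up (y Z : Submodule F V) (h : y ≤ Z) :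
    {u : Submodule F V | y ≤ u ∧ u ≤ Z ∧ finrank F y + 1 = finrank F u}.ncard *
      (Fintype.card F ^ (finrank F y + 1) - Fintype.card F ^ finrank F y) =
      Fintype.card F ^ finrank F Z - Fintype.card F ^ finrank F y := by
  classical
  have : Finite V := Module.finite_of_finite F
  have : Fintype V := Fintype.ofFinite _
  have hd : ∀ u : Submodule F V, y ≤ u → ((u : Set V) \ y).toFinset.card =
      Fintype.card F ^ finrank F u - Fintype.card F ^ finrank F y := by
    intro u hu
    rw [← Set.ncard_eq_toFinset_card', Set.ncard_sdiff (by exact hu) (Set.toFinite _), hm_ncard_sub,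
      hm_ncard_sub]
  rw [← hd Z h, Set.ncard_eq_toFinset_card']
  rw [Finset.card_eq_sum_card_fiberwise (f := fun v => y ⊔ Submodule.span F {v})
    (t := {u : Submodule F V | y ≤ u ∧ u ≤ Z ∧ finrank F y + 1 = finrank F u}.toFinset)]
  · rw [Finset.sum_const_nat]
    intro u hu
    simp only [Set.mem_toFinset, Set.mem_ofPred_eq] at hu
    obtain ⟨h1, h2, h3⟩ := hu
    rw [h3, ← hd u h1]
    congr 1
    ext v
    simp only [Finset.mem_filter, Set.mem_toFinset, Set.mem_sdiff, SetLike.mem_coe]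
    constructor
    · rintro ⟨⟨_, hv⟩, rfl⟩
      exact ⟨Submodule.mem_sup_right (Submodule.mem_span_singleton_self v), hv⟩
    · rintro ⟨hv, hvy⟩
      refine ⟨⟨h2 hv, hvy⟩, ?_⟩
      apply Submodule.eq_of_le_of_finrank_eq
      · exact sup_le h1 ((Submodule.span_singleton_le_iff_mem _ _).2 hv)
      · rw [hm_finrank_sup_span hvy, h3]
  · intro v hv
    simp only [Set.coe_toFinset, Set.mem_sdiff, SetLike.mem_coe, Set.mem_ofPred_eq] at hv ⊢
    exact ⟨le_sup_left, sup_le h ((Submodule.span_singleton_le_iff_mem _ _).2 hv.1),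
      (hm_finrank_sup_span hv.2).symm⟩

/-- the number of atoms of an interval -/
lemma hm_count_upC (y Z : Submodule F V) (h : y ≤ Z) :
    ({u : Submodule F V | y ≤ u ∧ u ≤ Z ∧ finrank F y + 1 = finrank F u}.ncard : ℝ) =
      ((Fintype.card F : ℝ) ^ finrank F Z / (Fintype.card F : ℝ) ^ finrank F y - 1) /
        ((Fintype.card F : ℝ) - 1) := by
  have h1 := hm_count_up y Z h
  have hq : (1 : ℝ) < Fintype.card F := by exact_mod_cast hm_q_gt (F := F)
  have hle : Fintype.card F ^ finrank F y ≤ Fintype.card F ^ finrank F Z :=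
    Nat.pow_le_pow_right (by have := hm_q_gt (F := F); omega) (Submodule.finrank_mono h)
  have hle2 : Fintype.card F ^ finrank F y ≤ Fintype.card F ^ (finrank F y + 1) :=
    Nat.pow_le_pow_right (by have := hm_q_gt (F := F); omega) (by omega)
  have h2 := congrArg (Nat.cast (R := ℝ)) h1
  push_cast [Nat.cast_sub hle, Nat.cast_sub hle2] at h2
  have h3 : (Fintype.card F : ℝ) - 1 ≠ 0 := by linarith
  have h4 : (Fintype.card F : ℝ) ^ finrank F y ≠ 0 := by positivity
  field_simp
  rw [pow_succ] at h2
  linarith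

lemma hm_count_downC (Y y : Submodule F V) (h : Y ≤ y) :
    ({u : Submodule F V | Y ≤ u ∧ u ≤ y ∧ finrank F u + 1 = finrank F y}.ncard : ℝ) =
      ((Fintype.card F : ℝ) ^ finrank F y / (Fintype.card F : ℝ) ^ finrank F Y - 1) /
        ((Fintype.card F : ℝ) - 1) := by
  have hq : (1 : ℝ) < Fintype.card F := by exact_mod_cast hm_q_gt (F := F)
  have h4 : (Fintype.card F : ℝ) ≠ 0 := by positivity
  have hA : ∀ u : Submodule F V, finrank F u + finrank F u.dualAnnihilator = finrank F V :=
    fun u => Subspace.finrank_add_finrank_dualAnnihilator_eq u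
  have key := hm_count_upC (y.dualAnnihilator) (Y.dualAnnihilator)
    (Submodule.dualAnnihilator_anti h)
  have e : {u : Submodule F (Dual F V) | y.dualAnnihilator ≤ u ∧ u ≤ Y.dualAnnihilator ∧
      finrank F y.dualAnnihilator + 1 = finrank F u} =
      (fun u : Submodule F V => u.dualAnnihilator) ''
      {u : Submodule F V | Y ≤ u ∧ u ≤ y ∧ finrank F u + 1 = finrank F y} := by
    ext u
    simp only [Set.mem_ofPred_eq, Set.mem_image]
    constructor
    · rintro ⟨h1, h2, h3⟩
      obtain ⟨v, rfl⟩ : ∃ v : Submodule F V, v.dualAnnihilator = u :=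
        ⟨u.dualCoannihilator, Subspace.dualCoannihilator_dualAnnihilator_eq⟩
      refine ⟨v, ⟨?_, ?_, ?_⟩, rfl⟩
      · exact Subspace.dualAnnihilator_le_dualAnnihilator_iff.1 h2
      · exact Subspace.dualAnnihilator_le_dualAnnihilator_iff.1 h1
      · have := hA v; have := hA y; omega
    · rintro ⟨v, ⟨h1, h2, h3⟩, rfl⟩
      refine ⟨Submodule.dualAnnihilator_anti h2, Submodule.dualAnnihilator_anti h1, ?_⟩
      have := hA v; have := hA y; omega
  rw [e, Set.ncard_image_of_injective _ (fun u v h => Subspace.dualAnnihilator_inj.1 h)] at key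
  rw [key]
  congr 2
  have h5 := hA Y
  have h6 := hA y
  rw [div_eq_div_iff (by positivity) (by positivity), ← pow_add, ← pow_add]
  congr 1; omega

end Counting

section Relations

variable {F : Type} [Field F] [Fintype F] {a b : ℕ}

lemma hm_bmono {V : Type} [AddCommGroup V] [Module F V] [FiniteDimensional F V]
    (x : Submodule F V) {u v : Submodule F V} (h : u ≤ v) :
    finrank F u + finrank F ↥(x ⊓ v) ≤ finrank F v + finrank F ↥(x ⊓ u) := by
  have h1 := Submodule.finrank_sup_add_finrank_inf_eq (x ⊓ v) u
  have h2 : (x ⊓ v) ⊓ u = x ⊓ u := by rw [inf_assoc, inf_eq_right.2 h]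
  have h3 : finrank F ↥((x ⊓ v) ⊔ u) ≤ finrank F v :=
    Submodule.finrank_mono (sup_le inf_le_right h)
  rw [h2] at h1
  omega

lemma hm_xmono {V : Type} [AddCommGroup V] [Module F V] [FiniteDimensional F V]
    (x : Submodule F V) {u v : Submodule F V} (h : u ≤ v) :
    finrank F ↥(x ⊓ u) ≤ finrank F ↥(x ⊓ v) := Submodule.finrank_mono (inf_le_inf_left x h)

lemma hm_sum_ncard {ι : Type} [Fintype ι] (p r : ι → Prop) [DecidablePred p] [DecidablePred r] :
    ∑ u, (if p u then (1 : ℂ) else 0) * (if r u then 1 else 0) =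
      (({u | p u ∧ r u}.ncard : ℝ) : ℂ) := by
  classical
  rw [Set.ncard_eq_toFinset_card']
  simp only [← ite_and, mul_ite, mul_one, mul_zero]
  rw [Finset.sum_ite, Finset.sum_const_zero, add_zero, Finset.sum_const, nsmul_eq_mul, mul_one]
  push_cast
  congr 2
  ext u
  simp [and_comm]

open Classical in
lemma hm_up_ncard {V : Type} [AddCommGroup V] [Module F V] [FiniteDimensional F V]
    (Q : Submodule F V → Prop) {y z : Submodule F V} (hne : y ≠ z) {s : Set (Submodule F V)}
    (hs : ∀ u, u ∈ s ↔ (y ≤ u ∧ z ≤ u ∧ finrank F y + 1 = finrank F u ∧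
      finrank F z + 1 = finrank F u ∧ Q u)) :
    s.ncard = if finrank F y = finrank F z ∧ finrank F ↥(y ⊔ z) = finrank F y + 1 ∧ Q (y ⊔ z)
      then 1 else 0 := by
  have : Finite V := Module.finite_of_finite F
  have key : ∀ u, u ∈ s → u = y ⊔ z := by
    intro u hu
    obtain ⟨h1, h2, h3, h4, _⟩ := (hs u).1 hu
    symm
    apply Submodule.eq_of_le_of_finrank_le (sup_le h1 h2)
    by_contra hlt
    push Not at hlt
    have h5 : finrank F y ≤ finrank F ↥(y ⊔ z) := Submodule.finrank_mono le_sup_left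
    have h6 : y = y ⊔ z := Submodule.eq_of_le_of_finrank_le le_sup_left (by omega)
    have h7 : z = y ⊔ z := Submodule.eq_of_le_of_finrank_le le_sup_right (by omega)
    exact hne (h6.trans h7.symm)
  split_ifs with h
  · rw [Set.ncard_eq_one]
    refine ⟨y ⊔ z, ?_⟩
    ext u
    constructor
    · exact key u
    · rintro rfl
      exact (hs _).2 ⟨le_sup_left, le_sup_right, h.2.1.symm, by omega, h.2.2⟩
  · rw [Set.ncard_eq_zero (Set.toFinite _), Set.eq_empty_iff_forall_notMem]
    intro u hu
    have := key u hu
    subst this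
    obtain ⟨h1, h2, h3, h4, h5⟩ := (hs _).1 hu
    exact h ⟨by omega, h3.symm, h5⟩

open Classical in
lemma hm_down_ncard {V : Type} [AddCommGroup V] [Module F V] [FiniteDimensional F V]
    (Q : Submodule F V → Prop) {y z : Submodule F V} (hne : y ≠ z) {s : Set (Submodule F V)}
    (hs : ∀ u, u ∈ s ↔ (u ≤ y ∧ u ≤ z ∧ finrank F u + 1 = finrank F y ∧
      finrank F u + 1 = finrank F z ∧ Q u)) :
    s.ncard = if finrank F y = finrank F z ∧ finrank F ↥(y ⊔ z) = finrank F y + 1 ∧ Q (y ⊓ z)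
      then 1 else 0 := by
  have hmod := Submodule.finrank_sup_add_finrank_inf_eq y z
  have : Finite V := Module.finite_of_finite F
  have key : ∀ u, u ∈ s → u = y ⊓ z := by
    intro u hu
    obtain ⟨h1, h2, h3, h4, _⟩ := (hs u).1 hu
    apply Submodule.eq_of_le_of_finrank_le (le_inf h1 h2)
    by_contra hlt
    push Not at hlt
    have h6 : y ⊓ z = y := Submodule.eq_of_le_of_finrank_le inf_le_left (by omega)
    have h7 : y ⊓ z = z := Submodule.eq_of_le_of_finrank_le inf_le_right (by omega)
    exact hne (h6.symm.trans h7)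
  split_ifs with h
  · rw [Set.ncard_eq_one]
    refine ⟨y ⊓ z, ?_⟩
    ext u
    constructor
    · exact key u
    · rintro rfl
      exact (hs _).2 ⟨inf_le_left, inf_le_right, by omega, by omega, h.2.2⟩
  · rw [Set.ncard_eq_zero (Set.toFinite _), Set.eq_empty_iff_forall_notMem]
    intro u hu
    have := key u hu
    subst this
    obtain ⟨h1, h2, h3, h4, h5⟩ := (hs _).1 hu
    exact h ⟨by omega, by omega, h5⟩

variable (x : Submodule F (Fin (a + b) → F))

lemma hm_L1T : (Lone F a b x).transpose = Rone F a b x := rfl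
lemma hm_L2T : (Ltwo F a b x).transpose = Rtwo F a b x := rfl

lemma hm_eq_empty {ι : Type} [Finite ι] {s : Set ι} (h : ∀ u, u ∉ s) : s.ncard = 0 := by
  rw [Set.ncard_eq_zero (Set.toFinite _), Set.eq_empty_iff_forall_notMem]; exact h

/-- `L₁ R₂ = R₂ L₁` -/
lemma hm_rel1 : Lone F a b x * Rtwo F a b x = Rtwo F a b x * Lone F a b x := by
  classical
  ext y z
  rw [Matrix.mul_apply, Matrix.mul_apply]
  unfold Lone Rtwo
  rw [hm_sum_ncard, hm_sum_ncard]
  congr 2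
  by_cases hyz : y = z
  · subst hyz
    rw [hm_eq_empty, hm_eq_empty]
    · rintro u ⟨h1, h2⟩; omega
    · rintro u ⟨h1, h2⟩; omega
  rw [hm_up_ncard (fun u => finrank F ↥(x ⊓ y) + 1 = finrank F ↥(x ⊓ u) ∧
      finrank F ↥(x ⊓ z) = finrank F ↥(x ⊓ u)) hyz (by intro u; simp only [Set.mem_ofPred_eq]; tauto),
    hm_down_ncard (fun u => finrank F ↥(x ⊓ u) = finrank F ↥(x ⊓ y) ∧
      finrank F ↥(x ⊓ u) + 1 = finrank F ↥(x ⊓ z)) hyz (by intro u; simp only [Set.mem_ofPred_eq]; tauto)]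
  have hmod := Submodule.finrank_sup_add_finrank_inf_eq y z
  have e1 := hm_bmono x (le_sup_left : y ≤ y ⊔ z)
  have e2 := hm_bmono x (le_sup_right : z ≤ y ⊔ z)
  have e3 := hm_bmono x (inf_le_left : y ⊓ z ≤ y)
  have e4 := hm_bmono x (inf_le_right : y ⊓ z ≤ z)
  have f1 := hm_xmono x (le_sup_left : y ≤ y ⊔ z)
  have f2 := hm_xmono x (le_sup_right : z ≤ y ⊔ z)
  have f3 := hm_xmono x (inf_le_left : y ⊓ z ≤ y)
  have f4 := hm_xmono x (inf_le_right : y ⊓ z ≤ z)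
  congr 1
  apply propext
  constructor
  · rintro ⟨h1, h2, h3, h4⟩; refine ⟨h1, h2, ?_, ?_⟩ <;> omega
  · rintro ⟨h1, h2, h3, h4⟩; refine ⟨h1, h2, ?_, ?_⟩ <;> omega

/-- `L₂ R₁ = R₁ L₂` -/
lemma hm_rel1' : Ltwo F a b x * Rone F a b x = Rone F a b x * Ltwo F a b x := by
  have := congrArg Matrix.transpose (hm_rel1 x)
  rw [Matrix.transpose_mul, Matrix.transpose_mul] at this
  exact this

/-- `R₁ R₂ = q R₂ R₁` -/
lemma hm_rel2 : Rone F a b x * Rtwo F a b x =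
    (Fintype.card F : ℂ) • (Rtwo F a b x * Rone F a b x) := by
  classical
  ext y z
  rw [Matrix.smul_apply, Matrix.mul_apply, Matrix.mul_apply]
  unfold Rone Rtwo
  rw [hm_sum_ncard, hm_sum_ncard]
  by_cases h : z ≤ y ∧ finrank F y = finrank F z + 2 ∧
      finrank F ↥(x ⊓ y) = finrank F ↥(x ⊓ z) + 1
  · obtain ⟨h1, h2, h3⟩ := h
    set s1 : Set (Submodule F (Fin (a + b) → F)) := {u | (u ≤ y ∧ finrank F u + 1 = finrank F y ∧
      finrank F ↥(x ⊓ u) + 1 = finrank F ↥(x ⊓ y)) ∧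
      (z ≤ u ∧ finrank F z + 1 = finrank F u ∧ finrank F ↥(x ⊓ z) = finrank F ↥(x ⊓ u))} with hs1
    set s2 : Set (Submodule F (Fin (a + b) → F)) := {u | (u ≤ y ∧ finrank F u + 1 = finrank F y ∧
      finrank F ↥(x ⊓ u) = finrank F ↥(x ⊓ y)) ∧
      (z ≤ u ∧ finrank F z + 1 = finrank F u ∧
        finrank F ↥(x ⊓ z) + 1 = finrank F ↥(x ⊓ u))} with hs2
    have hdim : finrank F ↥(z ⊔ x ⊓ y) = finrank F z + 1 := by
      have e1 := Submodule.finrank_sup_add_finrank_inf_eq z (x ⊓ y)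
      have e2 : z ⊓ (x ⊓ y) = x ⊓ z := by
        rw [inf_left_comm, inf_eq_left.2 h1]
      rw [e2] at e1; omega
    have hs2c : s2.ncard = 1 := by
      rw [Set.ncard_eq_one]
      refine ⟨z ⊔ x ⊓ y, ?_⟩
      ext u
      simp only [hs2, Set.mem_ofPred_eq, Set.mem_singleton_iff]
      constructor
      · rintro ⟨⟨g1, g2, g3⟩, g4, g5, g6⟩
        have : x ⊓ u = x ⊓ y := Submodule.eq_of_le_of_finrank_eq (inf_le_inf_left x g1) g3
        symm
        apply Submodule.eq_of_le_of_finrank_eq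
        · rw [← this]; exact sup_le g4 inf_le_right
        · omega
      · rintro rfl
        have e3 : x ⊓ (z ⊔ x ⊓ y) = x ⊓ y := by
          apply le_antisymm
          · exact inf_le_inf_left x (sup_le h1 inf_le_right)
          · exact le_inf inf_le_left le_sup_right
        rw [e3]
        exact ⟨⟨sup_le h1 inf_le_right, by omega, rfl⟩, le_sup_left, by omega, by omega⟩
    have htot : ((s1 ∪ s2).ncard : ℝ) = (Fintype.card F : ℝ) + 1 := by
      have : s1 ∪ s2 = {u | z ≤ u ∧ u ≤ y ∧ finrank F z + 1 = finrank F u} := by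
        ext u
        simp only [hs1, hs2, Set.mem_union, Set.mem_ofPred_eq]
        constructor
        · rintro (⟨⟨g1, g2, g3⟩, g4, g5, g6⟩ | ⟨⟨g1, g2, g3⟩, g4, g5, g6⟩)
          · exact ⟨g4, g1, g5⟩
          · exact ⟨g4, g1, g5⟩
        · rintro ⟨g1, g2, g3⟩
          have f1 := hm_xmono x g1
          have f2 := hm_xmono x g2
          rcases Nat.lt_or_ge (finrank F ↥(x ⊓ z)) (finrank F ↥(x ⊓ u)) with hlt | hge
          · right
            exact ⟨⟨g2, by omega, by omega⟩, g1, g3, by omega⟩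
          · left
            exact ⟨⟨g2, by omega, by omega⟩, g1, g3, by omega⟩
      rw [this, hm_count_upC z y h1, h2]
      have hq : (1 : ℝ) < Fintype.card F := by exact_mod_cast hm_q_gt (F := F)
      have h3 : (Fintype.card F : ℝ) - 1 ≠ 0 := by linarith
      have h4 : (Fintype.card F : ℝ) ^ finrank F z ≠ 0 := by positivity
      field_simp
      ring
    rw [Set.ncard_union_eq (by
      rw [Set.disjoint_left]
      rintro u ⟨⟨g1, g2, g3⟩, g4, g5, g6⟩ ⟨⟨k1, k2, k3⟩, k4, k5, k6⟩
      omega) (Set.toFinite _) (Set.toFinite _), hs2c] at htot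
    push_cast at htot
    have : (s1.ncard : ℝ) = Fintype.card F := by linarith
    rw [this, hs2c]
    simp
  · rw [hm_eq_empty, hm_eq_empty]
    · simp
    · rintro u ⟨⟨g1, g2, g3⟩, g4, g5, g6⟩
      exact h ⟨g4.trans g1, by omega, by omega⟩
    · rintro u ⟨⟨g1, g2, g3⟩, g4, g5, g6⟩
      exact h ⟨g4.trans g1, by omega, by omega⟩

/-- `L₂ L₁ = q L₁ L₂` -/
lemma hm_rel2' : Ltwo F a b x * Lone F a b x =
    (Fintype.card F : ℂ) • (Lone F a b x * Ltwo F a b x) := by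
  have := congrArg Matrix.transpose (hm_rel2 x)
  rw [Matrix.transpose_smul, Matrix.transpose_mul, Matrix.transpose_mul] at this
  exact this

/-- off-diagonal entries of the products, in a common form -/
lemma hm_offdiag {y z : Submodule F (Fin (a + b) → F)} (hyz : y ≠ z) :
    ∃ A B C D : ℕ, (Lone F a b x * Rone F a b x) y z = A ∧ (Rone F a b x * Lone F a b x) y z = B ∧
      (Ltwo F a b x * Rtwo F a b x) y z = C ∧ (Rtwo F a b x * Ltwo F a b x) y z = D ∧
      B ≤ A ∧ A + C = B + D := by
  classical
  simp only [Matrix.mul_apply]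
  unfold Lone Rone Ltwo Rtwo
  simp only [hm_sum_ncard]
  rw [hm_up_ncard (fun u => finrank F ↥(x ⊓ y) + 1 = finrank F ↥(x ⊓ u) ∧
      finrank F ↥(x ⊓ z) + 1 = finrank F ↥(x ⊓ u)) hyz (by intro u; simp only [Set.mem_ofPred_eq]; tauto),
    hm_down_ncard (fun u => finrank F ↥(x ⊓ u) + 1 = finrank F ↥(x ⊓ y) ∧
      finrank F ↥(x ⊓ u) + 1 = finrank F ↥(x ⊓ z)) hyz (by intro u; simp only [Set.mem_ofPred_eq]; tauto),
    hm_up_ncard (fun u => finrank F ↥(x ⊓ y) = finrank F ↥(x ⊓ u) ∧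
      finrank F ↥(x ⊓ z) = finrank F ↥(x ⊓ u)) hyz (by intro u; simp only [Set.mem_ofPred_eq]; tauto),
    hm_down_ncard (fun u => finrank F ↥(x ⊓ u) = finrank F ↥(x ⊓ y) ∧
      finrank F ↥(x ⊓ u) = finrank F ↥(x ⊓ z)) hyz (by intro u; simp only [Set.mem_ofPred_eq]; tauto)]
  have hmod := Submodule.finrank_sup_add_finrank_inf_eq y z
  have e1 := hm_bmono x (le_sup_left : y ≤ y ⊔ z)
  have e2 := hm_bmono x (le_sup_right : z ≤ y ⊔ z)
  have e3 := hm_bmono x (inf_le_left : y ⊓ z ≤ y)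
  have e4 := hm_bmono x (inf_le_right : y ⊓ z ≤ z)
  have f1 := hm_xmono x (le_sup_left : y ≤ y ⊔ z)
  have f2 := hm_xmono x (le_sup_right : z ≤ y ⊔ z)
  have f3 := hm_xmono x (inf_le_left : y ⊓ z ≤ y)
  have f4 := hm_xmono x (inf_le_right : y ⊓ z ≤ z)
  have f5 := Submodule.finrank_sup_add_finrank_inf_eq (x ⊓ y) (x ⊓ z)
  rw [← inf_inf_distrib_left] at f5
  have f6 : finrank F ↥(x ⊓ y ⊔ x ⊓ z) ≤ finrank F ↥(x ⊓ (y ⊔ z)) :=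
    Submodule.finrank_mono (sup_le (inf_le_inf_left x le_sup_left)
      (inf_le_inf_left x le_sup_right))
  refine ⟨_, _, _, _, Complex.ofReal_natCast _, Complex.ofReal_natCast _, Complex.ofReal_natCast _,
    Complex.ofReal_natCast _, ?_, ?_⟩
  all_goals beta_reduce
  all_goals (split_ifs <;> omega)

/-- scalar of the total commutator -/
noncomputable def hmD (q : ℂ) (n d : ℕ) : ℂ := (q ^ n / q ^ d - q ^ d) / (q - 1)

lemma hm_diag (y : Submodule F (Fin (a + b) → F)) :
    (Lone F a b x * Rone F a b x) y y + (Ltwo F a b x * Rtwo F a b x) y y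
      - (Rone F a b x * Lone F a b x) y y - (Rtwo F a b x * Ltwo F a b x) y y =
      hmD (Fintype.card F) (a + b) (finrank F y) := by
  classical
  simp only [Matrix.mul_apply]
  unfold Lone Rone Ltwo Rtwo
  simp only [hm_sum_ncard]
  have hu := hm_count_upC y ⊤ le_top
  have hd := hm_count_downC ⊥ y bot_le
  rw [← Set.ncard_inter_add_ncard_sdiff_eq_ncard _ {u | finrank F ↥(x ⊓ y) + 1 = finrank F ↥(x ⊓ u)} (Set.toFinite _)] at hu
  rw [← Set.ncard_inter_add_ncard_sdiff_eq_ncard _ {u | finrank F ↥(x ⊓ u) + 1 = finrank F ↥(x ⊓ y)} (Set.toFinite _)] at hd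
  push_cast at hu hd
  have E1 : ∀ {s t : Set (Submodule F (Fin (a + b) → F))}, (∀ u, u ∈ s ↔ u ∈ t) →
    ((s.ncard : ℝ) : ℂ) = ((t.ncard : ℝ) : ℂ) := fun h => by rw [Set.ext h]
  rw [finrank_top, Module.finrank_fin_fun] at hu
  rw [finrank_bot, pow_zero, div_one] at hd
  have hu' := congrArg (Complex.ofReal) hu
  have hd' := congrArg (Complex.ofReal) hd
  push_cast at hu' hd'
  have : hmD (Fintype.card F) (a + b) (finrank F y) =
    ((Fintype.card F : ℂ) ^ (a + b) / (Fintype.card F : ℂ) ^ finrank F y - 1) /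
        ((Fintype.card F : ℂ) - 1) - ((Fintype.card F : ℂ) ^ finrank F y - 1) /
        ((Fintype.card F : ℂ) - 1) := by
    unfold hmD; rw [← sub_div]; congr 1; ring
  rw [this, ← hu', ← hd', sub_sub]
  push_cast
  congr 1
  · congr 1
    · norm_cast; congr 1; ext u; simp only [Set.mem_ofPred_eq, Set.mem_inter_iff, le_top]; tauto
    · norm_cast; congr 1; ext u; simp only [Set.mem_ofPred_eq, Set.mem_sdiff, le_top]
      constructor
      · rintro ⟨⟨h1, h2, h3⟩, _⟩; exact ⟨⟨h1, trivial, h2⟩, by omega⟩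
      · rintro ⟨⟨h1, _, h2⟩, h3⟩
        have e1 := hm_bmono x h1
        have f1 := hm_xmono x h1
        refine ⟨⟨h1, h2, by omega⟩, h1, h2, by omega⟩
  · congr 1
    · norm_cast; congr 1; ext u; simp only [Set.mem_ofPred_eq, Set.mem_inter_iff, bot_le]; tauto
    · norm_cast; congr 1; ext u; simp only [Set.mem_ofPred_eq, Set.mem_sdiff, bot_le]
      constructor
      · rintro ⟨⟨h1, h2, h3⟩, _⟩; exact ⟨⟨trivial, h1, h2⟩, by omega⟩
      · rintro ⟨⟨_, h1, h2⟩, h3⟩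
        have e1 := hm_bmono x h1
        have f1 := hm_xmono x h1
        refine ⟨⟨h1, h2, by omega⟩, h1, h2, by omega⟩

/-- The total commutator is diagonal. -/
lemma hm_rel3 : Lone F a b x * Rone F a b x - Rone F a b x * Lone F a b x
    + (Ltwo F a b x * Rtwo F a b x - Rtwo F a b x * Ltwo F a b x) =
      Matrix.diagonal fun y : Submodule F (Fin (a + b) → F) => hmD (Fintype.card F) (a + b) (finrank F y) := by
  ext y z
  rw [Matrix.add_apply, Matrix.sub_apply, Matrix.sub_apply]
  by_cases hyz : y = z
  · subst hyz
    rw [Matrix.diagonal_apply_eq, ← hm_diag x y]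
    ring
  · rw [Matrix.diagonal_apply_ne _ hyz]
    obtain ⟨A, B, C, D, h1, h2, h3, h4, h5, h6⟩ := hm_offdiag x hyz
    rw [h1, h2, h3, h4]
    have := congrArg (Nat.cast (R := ℂ)) h6
    push_cast at this
    linear_combination this

end Relations

section Operators

variable {F : Type} [Field F] [Fintype F] {a b : ℕ}
variable (x : Submodule F (Fin (a + b) → F))

open Matrix

/-- the commutator `[L₁, R₁]` -/
noncomputable def hmT : Matrix (Submodule F (Fin (a + b) → F)) (Submodule F (Fin (a + b) → F)) ℂ :=
  Lone F a b x * Rone F a b x - Rone F a b x * Lone F a b x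

/-- the commutator `[L₂, R₂]` -/
noncomputable def hmT' : Matrix (Submodule F (Fin (a + b) → F)) (Submodule F (Fin (a + b) → F)) ℂ :=
  Ltwo F a b x * Rtwo F a b x - Rtwo F a b x * Ltwo F a b x

lemma hm_TR2 : hmT x * Rtwo F a b x = (Fintype.card F : ℂ) • (Rtwo F a b x * hmT x) := by
  unfold hmT
  rw [sub_mul, mul_sub, smul_sub, mul_assoc, hm_rel2, mul_smul_comm, ← mul_assoc, hm_rel1,
    mul_assoc (Rone F a b x), hm_rel1, ← mul_assoc, ← mul_assoc, ← mul_assoc, hm_rel2, smul_mul_assoc]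

lemma hm_T'R1 : (Fintype.card F : ℂ) • (hmT' x * Rone F a b x) = Rone F a b x * hmT' x := by
  unfold hmT'
  rw [sub_mul, mul_sub, smul_sub, mul_assoc, ← mul_smul_comm, ← hm_rel2, ← mul_assoc, hm_rel1',
    mul_assoc (Rtwo F a b x), hm_rel1', ← mul_assoc (Rtwo F a b x), ← smul_mul_assoc, ← hm_rel2,
    mul_assoc, mul_assoc]

lemma hm_Tsymm : (hmT x).transpose = hmT x := by
  unfold hmT
  rw [Matrix.transpose_sub, Matrix.transpose_mul, Matrix.transpose_mul]
  rfl

lemma hm_T'symm : (hmT' x).transpose = hmT' x := by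
  unfold hmT'
  rw [Matrix.transpose_sub, Matrix.transpose_mul, Matrix.transpose_mul]
  rfl

lemma hm_L2T2 : Ltwo F a b x * hmT x = (Fintype.card F : ℂ) • (hmT x * Ltwo F a b x) := by
  have := congrArg Matrix.transpose (hm_TR2 x)
  rw [Matrix.transpose_smul, Matrix.transpose_mul, Matrix.transpose_mul, hm_Tsymm] at this
  exact this

lemma hm_L1T' : (Fintype.card F : ℂ) • (Lone F a b x * hmT' x) = hmT' x * Lone F a b x := by
  have := congrArg Matrix.transpose (hm_T'R1 x)
  rw [Matrix.transpose_smul, Matrix.transpose_mul, Matrix.transpose_mul, hm_T'symm] at this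
  exact this

/-- `f` is supported on `P_{i,j}` -/
def hmHom (i j : ℕ) (f : Submodule F (Fin (a + b) → F) → ℂ) : Prop :=
  ∀ y, f y ≠ 0 → finrank F ↥(x ⊓ y) = i ∧ finrank F y = i + j

variable {x}

lemma hm_mv_ne {ι : Type} [Fintype ι] {M : Matrix ι ι ℂ} {f : ι → ℂ} {y : ι}
    (h : (M *ᵥ f) y ≠ 0) : ∃ z, M y z ≠ 0 ∧ f z ≠ 0 := by
  obtain ⟨z, _, hz⟩ := Finset.exists_ne_zero_of_sum_ne_zero h
  exact ⟨z, left_ne_zero_of_mul hz, right_ne_zero_of_mul hz⟩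

lemma hm_homR1 {i j : ℕ} {f : Submodule F (Fin (a + b) → F) → ℂ} (h : hmHom x i j f) :
    hmHom x (i + 1) j (Rone F a b x *ᵥ f) := by
  intro y hy
  obtain ⟨z, h1, h2⟩ := hm_mv_ne hy
  have h3 := h z h2
  simp only [Rone, ne_eq, ite_eq_right_iff, one_ne_zero, imp_false, not_not] at h1
  omega

lemma hm_homR2 {i j : ℕ} {f : Submodule F (Fin (a + b) → F) → ℂ} (h : hmHom x i j f) :
    hmHom x i (j + 1) (Rtwo F a b x *ᵥ f) := by
  intro y hy
  obtain ⟨z, h1, h2⟩ := hm_mv_ne hy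
  have h3 := h z h2
  simp only [Rtwo, ne_eq, ite_eq_right_iff, one_ne_zero, imp_false, not_not] at h1
  omega

lemma hm_homL1 {i j : ℕ} {f : Submodule F (Fin (a + b) → F) → ℂ} (h : hmHom x (i + 1) j f) :
    hmHom x i j (Lone F a b x *ᵥ f) := by
  intro y hy
  obtain ⟨z, h1, h2⟩ := hm_mv_ne hy
  have h3 := h z h2
  simp only [Lone, ne_eq, ite_eq_right_iff, one_ne_zero, imp_false, not_not] at h1
  omega

lemma hm_homL2 {i j : ℕ} {f : Submodule F (Fin (a + b) → F) → ℂ} (h : hmHom x i (j + 1) f) :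
    hmHom x i j (Ltwo F a b x *ᵥ f) := by
  intro y hy
  obtain ⟨z, h1, h2⟩ := hm_mv_ne hy
  have h3 := h z h2
  simp only [Ltwo, ne_eq, ite_eq_right_iff, one_ne_zero, imp_false, not_not] at h1
  omega

lemma hm_homL1z {j : ℕ} {f : Submodule F (Fin (a + b) → F) → ℂ} (h : hmHom x 0 j f) :
    Lone F a b x *ᵥ f = 0 := by
  ext y
  by_contra hy
  obtain ⟨z, h1, h2⟩ := hm_mv_ne hy
  have h3 := h z h2
  simp only [Lone, ne_eq, ite_eq_right_iff, one_ne_zero, imp_false, not_not] at h1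
  omega

lemma hm_homL2z {i : ℕ} {f : Submodule F (Fin (a + b) → F) → ℂ} (h : hmHom x i 0 f) :
    Ltwo F a b x *ᵥ f = 0 := by
  ext y
  by_contra hy
  obtain ⟨z, h1, h2⟩ := hm_mv_ne hy
  have h3 := h z h2
  simp only [Ltwo, ne_eq, ite_eq_right_iff, one_ne_zero, imp_false, not_not] at h1
  have := hm_bmono x h1.1
  have := Submodule.finrank_mono (inf_le_right : x ⊓ y ≤ y)
  omega

lemma hm_homT {i j : ℕ} {f : Submodule F (Fin (a + b) → F) → ℂ} (h : hmHom x i j f) :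
    hmHom x i j (hmT x *ᵥ f) := by
  intro y hy
  unfold hmT at hy
  rw [Matrix.sub_mulVec, ← Matrix.mulVec_mulVec, ← Matrix.mulVec_mulVec, Pi.sub_apply] at hy
  by_cases h1 : (Lone F a b x *ᵥ (Rone F a b x *ᵥ f)) y = 0
  · have h2 : (Rone F a b x *ᵥ (Lone F a b x *ᵥ f)) y ≠ 0 := by
      intro h2; rw [h1, h2, sub_zero] at hy; exact hy rfl
    cases i with
    | zero => rw [hm_homL1z h] at h2; simp at h2
    | succ i => exact hm_homR1 (hm_homL1 h) y h2
  · exact hm_homL1 (hm_homR1 h) y h1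

/-- action of `E*` -/
lemma hm_Estar_apply (i j : ℕ) (f : Submodule F (Fin (a + b) → F) → ℂ)
    (y : Submodule F (Fin (a + b) → F)) :
    ((Estar F a b x i j) *ᵥ f) y =
      (if finrank F ↥(x ⊓ y) = i ∧ finrank F y = i + j then 1 else 0) * f y := by
  unfold Estar
  rw [Matrix.mulVec_diagonal]
  congr 1
  norm_cast

lemma hm_Estar_hom (i j : ℕ) (f : Submodule F (Fin (a + b) → F) → ℂ) :
    hmHom x i j ((Estar F a b x i j) *ᵥ f) := by
  intro y hy
  rw [hm_Estar_apply] at hy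
  by_contra h
  rw [if_neg h, zero_mul] at hy
  exact hy rfl

lemma hm_Estar_self {i j : ℕ} {f : Submodule F (Fin (a + b) → F) → ℂ} (h : hmHom x i j f) :
    (Estar F a b x i j) *ᵥ f = f := by
  ext y
  rw [hm_Estar_apply]
  split_ifs with h1
  · rw [one_mul]
  · by_contra h2
    rw [zero_mul] at h2
    exact h1 (h y (fun h3 => h2 h3.symm))

lemma hm_Estar_other {i j k l : ℕ} {f : Submodule F (Fin (a + b) → F) → ℂ} (h : hmHom x i j f)
    (hne : ¬ (k = i ∧ l = j)) : (Estar F a b x k l) *ᵥ f = 0 := by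
  ext y
  rw [hm_Estar_apply]
  split_ifs with h1
  · rw [one_mul]
    by_contra h2
    have := h y h2
    omega
  · rw [zero_mul]; rfl

/-- eigenvalue of `[L₁,R₁]` -/
noncomputable def hmt (q : ℂ) (a : ℕ) (c : ℂ) (i j : ℕ) : ℂ :=
  q ^ j * (c * q ^ a / q ^ i - q ^ i) / (q - 1)

variable (x) in
/-- homogeneous eigenvectors -/
def hmEig (c : ℂ) (i j : ℕ) (f : Submodule F (Fin (a + b) → F) → ℂ) : Prop :=
  hmHom x i j f ∧ hmT x *ᵥ f = hmt (Fintype.card F) a c i j • f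

lemma hm_TT' {i j : ℕ} {f : Submodule F (Fin (a + b) → F) → ℂ} (h : hmHom x i j f) :
    hmT x *ᵥ f + hmT' x *ᵥ f = hmD (Fintype.card F) (a + b) (i + j) • f := by
  rw [← Matrix.add_mulVec]
  have h3 := hm_rel3 x
  change hmT x + hmT' x = _ at h3
  rw [h3]
  ext y
  rw [Matrix.mulVec_diagonal, Pi.smul_apply, smul_eq_mul]
  by_cases hy : f y = 0
  · rw [hy]; simp
  · rw [(h y hy).2]

lemma hm_qne : (Fintype.card F : ℂ) ≠ 0 := by
  have := hm_q_gt (F := F)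
  exact_mod_cast (by omega : Fintype.card F ≠ 0)

lemma hm_q1ne : (Fintype.card F : ℂ) - 1 ≠ 0 := by
  have := hm_q_gt (F := F)
  rw [sub_ne_zero]
  exact_mod_cast (by omega : Fintype.card F ≠ 1)

lemma hm_eigT' {c : ℂ} {i j : ℕ} {f : Submodule F (Fin (a + b) → F) → ℂ} (h : hmEig x c i j f) :
    hmT' x *ᵥ f = (hmD (Fintype.card F) (a + b) (i + j) - hmt (Fintype.card F) a c i j) • f := by
  have := hm_TT' h.1
  rw [h.2] at this
  rw [sub_smul, ← this]; abel

lemma hm_eigR1 {c : ℂ} {i j : ℕ} {f : Submodule F (Fin (a + b) → F) → ℂ} (h : hmEig x c i j f) :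
    hmEig x c (i + 1) j (Rone F a b x *ᵥ f) := by
  refine ⟨hm_homR1 h.1, ?_⟩
  have h1 := hm_TT' (hm_homR1 h.1)
  have h2 := congrArg (fun M => M *ᵥ f) (hm_T'R1 x)
  simp only [Matrix.smul_mulVec, ← Matrix.mulVec_mulVec] at h2
  rw [hm_eigT' h, Matrix.mulVec_smul] at h2
  have hq := hm_qne (F := F)
  have hq1 := hm_q1ne (F := F)
  have h4 : hmT' x *ᵥ (Rone F a b x *ᵥ f) = ((Fintype.card F : ℂ)⁻¹ *
      (hmD (Fintype.card F) (a + b) (i + j) - hmt (Fintype.card F) a c i j)) •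
        (Rone F a b x *ᵥ f) := by
    rw [mul_smul, ← h2, smul_smul, inv_mul_cancel₀ hq, one_smul]
  rw [h4] at h1
  rw [eq_sub_of_add_eq h1, ← sub_smul]
  congr 1
  unfold hmD hmt
  field_simp
  ring

lemma hm_eigR2 {c : ℂ} {i j : ℕ} {f : Submodule F (Fin (a + b) → F) → ℂ} (h : hmEig x c i j f) :
    hmEig x c i (j + 1) (Rtwo F a b x *ᵥ f) := by
  refine ⟨hm_homR2 h.1, ?_⟩
  have h2 := congrArg (fun M => M *ᵥ f) (hm_TR2 x)
  simp only [Matrix.smul_mulVec, ← Matrix.mulVec_mulVec] at h2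
  rw [h2, h.2, Matrix.mulVec_smul, smul_smul]
  congr 1
  unfold hmt
  ring

lemma hm_eigL1 {c : ℂ} {i j : ℕ} {f : Submodule F (Fin (a + b) → F) → ℂ}
    (h : hmEig x c (i + 1) j f) : hmEig x c i j (Lone F a b x *ᵥ f) := by
  refine ⟨hm_homL1 h.1, ?_⟩
  have h1 := hm_TT' (hm_homL1 h.1)
  have h2 := congrArg (fun M => M *ᵥ f) (hm_L1T' x)
  simp only [Matrix.smul_mulVec, ← Matrix.mulVec_mulVec] at h2
  rw [hm_eigT' h, Matrix.mulVec_smul] at h2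
  have hq := hm_qne (F := F)
  have hq1 := hm_q1ne (F := F)
  rw [← h2] at h1
  rw [eq_sub_of_add_eq h1, smul_smul, ← sub_smul]
  congr 1
  unfold hmD hmt
  field_simp
  ring

lemma hm_eigL2 {c : ℂ} {i j : ℕ} {f : Submodule F (Fin (a + b) → F) → ℂ}
    (h : hmEig x c i (j + 1) f) : hmEig x c i j (Ltwo F a b x *ᵥ f) := by
  refine ⟨hm_homL2 h.1, ?_⟩
  have h2 := congrArg (fun M => M *ᵥ f) (hm_L2T2 x)
  simp only [Matrix.smul_mulVec, ← Matrix.mulVec_mulVec] at h2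
  rw [h.2, Matrix.mulVec_smul] at h2
  have hq := hm_qne (F := F)
  have hq1 := hm_q1ne (F := F)
  have h3 : hmT x *ᵥ (Ltwo F a b x *ᵥ f) = ((Fintype.card F : ℂ)⁻¹ *
      hmt (Fintype.card F) a c i (j + 1)) • (Ltwo F a b x *ᵥ f) := by
    rw [mul_smul, h2, smul_smul, inv_mul_cancel₀ hq, one_smul]
  rw [h3]
  congr 1
  unfold hmt
  field_simp
  ring

/-- Stability from generators. -/
lemma hm_stable_of {W : Submodule ℂ (Submodule F (Fin (a + b) → F) → ℂ)}
    (h1 : ∀ f ∈ W, Lone F a b x *ᵥ f ∈ W) (h2 : ∀ f ∈ W, Ltwo F a b x *ᵥ f ∈ W)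
    (h3 : ∀ f ∈ W, Rone F a b x *ᵥ f ∈ W) (h4 : ∀ f ∈ W, Rtwo F a b x *ᵥ f ∈ W)
    (h5 : ∀ i j : ℕ, ∀ f ∈ W, Estar F a b x i j *ᵥ f ∈ W) : MatStable (Halg F a b x) W := by
  have key : ∀ M ∈ Halg F a b x, ∀ f ∈ W, M *ᵥ f ∈ W := by
    intro M hM
    unfold Halg at hM
    induction hM using Algebra.adjoin_induction with
    | mem M hM =>
      rcases hM with hM | ⟨i, _, j, _, rfl⟩
      · rcases hM with rfl | rfl | rfl | rfl
        · exact h1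
        · exact h2
        · exact h3
        · exact h4
      · exact h5 i j
    | algebraMap r =>
      intro f hf
      rw [Algebra.algebraMap_eq_smul_one, Matrix.smul_mulVec, Matrix.one_mulVec]
      exact W.smul_mem r hf
    | add M N _ _ hM hN =>
      intro f hf
      rw [Matrix.add_mulVec]
      exact W.add_mem (hM f hf) (hN f hf)
    | mul M N _ _ hM hN =>
      intro f hf
      rw [← Matrix.mulVec_mulVec]
      exact hM _ (hN f hf)
  intro M hM
  rw [Submodule.map_le_iff_le_comap]
  intro f hf
  exact key M hM f hf

lemma hm_stable_mem {W : Submodule ℂ (Submodule F (Fin (a + b) → F) → ℂ)}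
    (h : MatStable (Halg F a b x) W) {M} (hM : M ∈ Halg F a b x) {f} (hf : f ∈ W) : M *ᵥ f ∈ W :=
  h M hM ⟨f, hf, rfl⟩

lemma hm_memL1 : Lone F a b x ∈ Halg F a b x := Algebra.subset_adjoin (Or.inl (by simp))
lemma hm_memL2 : Ltwo F a b x ∈ Halg F a b x := Algebra.subset_adjoin (Or.inl (by simp))
lemma hm_memR1 : Rone F a b x ∈ Halg F a b x := Algebra.subset_adjoin (Or.inl (by simp))
lemma hm_memR2 : Rtwo F a b x ∈ Halg F a b x := Algebra.subset_adjoin (Or.inl (by simp))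
lemma hm_memT : hmT x ∈ Halg F a b x :=
  Subalgebra.sub_mem _ (Subalgebra.mul_mem _ hm_memL1 hm_memR1)
    (Subalgebra.mul_mem _ hm_memR1 hm_memL1)

lemma hm_rangeX (hx : finrank F x = a) (y : Submodule F (Fin (a + b) → F)) :
    finrank F ↥(x ⊓ y) ≤ a :=
  (Submodule.finrank_mono (inf_le_left : x ⊓ y ≤ x)).trans_eq hx

lemma hm_rangeB (hx : finrank F x = a) (y : Submodule F (Fin (a + b) → F)) :
    finrank F y ≤ finrank F ↥(x ⊓ y) + b := by
  have := hm_bmono x (le_top : y ≤ ⊤)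
  rw [inf_top_eq, hx, finrank_top, Module.finrank_fin_fun] at this
  omega

lemma hm_leY (y : Submodule F (Fin (a + b) → F)) : finrank F ↥(x ⊓ y) ≤ finrank F y :=
  Submodule.finrank_mono inf_le_right

lemma hm_hom_bound (hx : finrank F x = a) {i j : ℕ} {f : Submodule F (Fin (a + b) → F) → ℂ}
    (h : hmHom x i j f) (h0 : f ≠ 0) : i ≤ a ∧ j ≤ b := by
  obtain ⟨y, hy⟩ := Function.ne_iff.1 h0
  have h1 := h y hy
  have := hm_rangeX hx y
  have := hm_rangeB hx y
  omega

lemma hm_memE (hx : finrank F x = a) {W : Submodule ℂ (Submodule F (Fin (a + b) → F) → ℂ)}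
    (h : MatStable (Halg F a b x) W) (i j : ℕ) {f} (hf : f ∈ W) : Estar F a b x i j *ᵥ f ∈ W := by
  by_cases hij : i ≤ a ∧ j ≤ b
  · exact hm_stable_mem h (Algebra.subset_adjoin (Or.inr ⟨i, hij.1, j, hij.2, rfl⟩)) hf
  · by_cases h0 : Estar F a b x i j *ᵥ f = 0
    · rw [h0]; exact W.zero_mem
    · exact absurd (hm_hom_bound hx (hm_Estar_hom i j f) h0) hij

variable (x) in
/-- the isotypic part for the central parameter `c` -/
noncomputable def hmK (c : ℂ) : Submodule ℂ (Submodule F (Fin (a + b) → F) → ℂ) :=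
  Submodule.span ℂ {f | ∃ i j, hmEig x c i j f}

/-- closure of a span under an operator -/
lemma hm_span_closed {E : Type} [AddCommGroup E] [Module ℂ E] (s : Set E) (A : E →ₗ[ℂ] E)
    (h : ∀ f ∈ s, A f ∈ Submodule.span ℂ s) : ∀ f ∈ Submodule.span ℂ s, A f ∈ Submodule.span ℂ s := by
  intro f hf
  have : Submodule.span ℂ s ≤ (Submodule.span ℂ s).comap A := Submodule.span_le.2 h
  exact this hf

lemma hm_K_stable (c : ℂ) : MatStable (Halg F a b x) (hmK x c) := by
  apply hm_stable_of
  · refine hm_span_closed _ (Lone F a b x).mulVecLin ?_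
    rintro f ⟨i, j, h⟩
    rw [Matrix.mulVecLin_apply]
    cases i with
    | zero => rw [hm_homL1z h.1]; exact Submodule.zero_mem _
    | succ i => exact Submodule.subset_span ⟨i, j, hm_eigL1 h⟩
  · refine hm_span_closed _ (Ltwo F a b x).mulVecLin ?_
    rintro f ⟨i, j, h⟩
    rw [Matrix.mulVecLin_apply]
    cases j with
    | zero => rw [hm_homL2z h.1]; exact Submodule.zero_mem _
    | succ j => exact Submodule.subset_span ⟨i, j, hm_eigL2 h⟩
  · refine hm_span_closed _ (Rone F a b x).mulVecLin ?_
    rintro f ⟨i, j, h⟩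
    exact Submodule.subset_span ⟨i + 1, j, hm_eigR1 h⟩
  · refine hm_span_closed _ (Rtwo F a b x).mulVecLin ?_
    rintro f ⟨i, j, h⟩
    exact Submodule.subset_span ⟨i, j + 1, hm_eigR2 h⟩
  · intro k l
    refine hm_span_closed _ (Estar F a b x k l).mulVecLin ?_
    rintro f ⟨i, j, h⟩
    rw [Matrix.mulVecLin_apply]
    by_cases hkl : k = i ∧ l = j
    · obtain ⟨rfl, rfl⟩ := hkl
      rw [hm_Estar_self h.1]
      exact Submodule.subset_span ⟨k, l, h⟩
    · rw [hm_Estar_other h.1 hkl]; exact Submodule.zero_mem _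

lemma hm_K_eig {c : ℂ} {f : Submodule F (Fin (a + b) → F) → ℂ} (hf : f ∈ hmK x c) {i j : ℕ}
    (h : hmHom x i j f) : hmEig x c i j f := by
  refine ⟨h, ?_⟩
  have key : hmK x c ≤ LinearMap.eqLocus
      ((hmT x).mulVecLin ∘ₗ (Estar F a b x i j).mulVecLin)
      (hmt (Fintype.card F) a c i j • (Estar F a b x i j).mulVecLin) := by
    refine Submodule.span_le.2 ?_
    rintro g ⟨k, l, hg⟩
    simp only [SetLike.mem_coe, LinearMap.mem_eqLocus, LinearMap.comp_apply,
      Matrix.mulVecLin_apply, LinearMap.smul_apply]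
    by_cases hkl : i = k ∧ j = l
    · obtain ⟨rfl, rfl⟩ := hkl
      rw [hm_Estar_self hg.1]
      exact hg.2
    · rw [hm_Estar_other hg.1 hkl]; simp
  have := key hf
  simp only [LinearMap.mem_eqLocus, LinearMap.comp_apply,
      Matrix.mulVecLin_apply, LinearMap.smul_apply] at this
  rwa [hm_Estar_self h] at this

end Operators

section Chains

open Matrix

lemma hm_chain {E : Type} [AddCommGroup E] [Module ℂ E] (A B : E →ₗ[ℂ] E) (v : E) (hv : v ≠ 0)
    (hA : A v = 0) (t : ℕ → ℂ)
    (ht : ∀ k, A (B (B^[k] v)) - B (A (B^[k] v)) = t k • B^[k] v) (n : ℕ) (hn : B^[n] v = 0) :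
    ∃ k, B^[k] v ≠ 0 ∧ ∑ m ∈ Finset.range (k + 1), t m = 0 := by
  classical
  have h1 : ∀ k, A (B^[k + 1] v) = (∑ m ∈ Finset.range (k + 1), t m) • B^[k] v := by
    intro k
    induction k with
    | zero =>
      have := ht 0
      simp only [Function.iterate_zero, id_eq, hA, map_zero, sub_zero] at this
      simpa using this
    | succ k ih =>
      have := ht (k + 1)
      rw [ih, map_smul, ← Function.iterate_succ_apply' B (k + 1) v,
        ← Function.iterate_succ_apply' B k v] at this
      rw [Finset.sum_range_succ, add_smul, ← this]
      abel
  have hex : ∃ n, B^[n] v = 0 := ⟨n, hn⟩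
  have h2 := Nat.find_spec hex
  have h3 : Nat.find hex ≠ 0 := by
    intro h; rw [h] at h2; exact hv h2
  obtain ⟨k, hk⟩ := Nat.exists_eq_succ_of_ne_zero h3
  refine ⟨k, Nat.find_min hex (by omega), ?_⟩
  have h4 := h1 k
  rw [hk] at h2
  rw [h2, map_zero] at h4
  exact (smul_eq_zero.1 h4.symm).resolve_right (Nat.find_min hex (by omega))

lemma hm_geo (N : ℕ) (hN : 0 < N) (β γ : ℂ) (k : ℕ)
    (h : ∑ m ∈ Finset.range (k + 1), (β / (N : ℂ) ^ m - γ * (N : ℂ) ^ m) = 0) :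
    β = γ * (N : ℂ) ^ k := by
  have hq : (N : ℂ) ≠ 0 := by exact_mod_cast hN.ne'
  have h1 : ∑ m ∈ Finset.range (k + 1), β / (N : ℂ) ^ m =
      β / (N : ℂ) ^ k * ∑ m ∈ Finset.range (k + 1), (N : ℂ) ^ m := by
    rw [← Finset.sum_range_reflect, Finset.mul_sum]
    refine Finset.sum_congr rfl fun m hm => ?_
    have : m ≤ k := by have := Finset.mem_range.1 hm; omega
    obtain ⟨d, rfl⟩ := Nat.exists_eq_add_of_le this
    have : m + d + 1 - 1 - m = d := by omega
    rw [this, pow_add]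
    field_simp
  rw [Finset.sum_sub_distrib, h1, ← Finset.mul_sum, ← sub_mul] at h
  have hS : (∑ m ∈ Finset.range (k + 1), (N : ℂ) ^ m) ≠ 0 := by
    have : 0 < ∑ m ∈ Finset.range (k + 1), N ^ m :=
      Finset.sum_pos (fun m _ => by positivity) ⟨0, by simp⟩
    exact_mod_cast this.ne'
  have h2 := (mul_eq_zero.1 h).resolve_right hS
  have h3 := sub_eq_zero.1 h2
  rw [← h3]
  field_simp

variable {F : Type} [Field F] [Fintype F] {a b : ℕ}
variable {x : Submodule F (Fin (a + b) → F)}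

lemma hm_iterR1 {c : ℂ} {i j : ℕ} {v : Submodule F (Fin (a + b) → F) → ℂ} (h : hmEig x c i j v)
    (k : ℕ) : hmEig x c (i + k) j ((Rone F a b x).mulVecLin^[k] v) := by
  induction k with
  | zero => exact h
  | succ k ih => rw [Function.iterate_succ_apply']; exact hm_eigR1 ih

lemma hm_iterR2 {c : ℂ} {i j : ℕ} {v : Submodule F (Fin (a + b) → F) → ℂ} (h : hmEig x c i j v)
    (k : ℕ) : hmEig x c i (j + k) ((Rtwo F a b x).mulVecLin^[k] v) := by
  induction k with
  | zero => exact h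
  | succ k ih => rw [Function.iterate_succ_apply']; exact hm_eigR2 ih

lemma hm_iterL1 {c : ℂ} {i j : ℕ} {v : Submodule F (Fin (a + b) → F) → ℂ} (h : hmEig x c i j v)
    (k : ℕ) : (Lone F a b x).mulVecLin^[k] v = 0 ∨
      (k ≤ i ∧ hmEig x c (i - k) j ((Lone F a b x).mulVecLin^[k] v)) := by
  induction k with
  | zero => exact Or.inr ⟨Nat.zero_le _, h⟩
  | succ k ih =>
    rw [Function.iterate_succ_apply']
    rcases ih with ih | ⟨hk, ih⟩
    · left; rw [ih, map_zero]
    · rcases Nat.lt_or_ge k i with h1 | h1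
      · right
        refine ⟨h1, ?_⟩
        have : i - k = i - (k + 1) + 1 := by omega
        rw [this] at ih
        exact hm_eigL1 ih
      · left
        have : i - k = 0 := by omega
        rw [this] at ih
        exact hm_homL1z ih.1

lemma hm_T_apply (f : Submodule F (Fin (a + b) → F) → ℂ) :
    (Lone F a b x).mulVecLin ((Rone F a b x).mulVecLin f) -
      (Rone F a b x).mulVecLin ((Lone F a b x).mulVecLin f) = hmT x *ᵥ f := by
  simp only [Matrix.mulVecLin_apply, hmT, Matrix.sub_mulVec, Matrix.mulVec_mulVec]

lemma hm_T'_apply (f : Submodule F (Fin (a + b) → F) → ℂ) :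
    (Ltwo F a b x).mulVecLin ((Rtwo F a b x).mulVecLin f) -
      (Rtwo F a b x).mulVecLin ((Ltwo F a b x).mulVecLin f) = hmT' x *ᵥ f := by
  simp only [Matrix.mulVecLin_apply, hmT', Matrix.sub_mulVec, Matrix.mulVec_mulVec]

lemma hm_up1 (hx : finrank F x = a) {c : ℂ} {i j : ℕ} {v : Submodule F (Fin (a + b) → F) → ℂ}
    (h : hmEig x c i j v) (hv : v ≠ 0) (hL : Lone F a b x *ᵥ v = 0) :
    ∃ k, (Rone F a b x).mulVecLin^[k] v ≠ 0 ∧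
      c * (Fintype.card F : ℂ) ^ a = (Fintype.card F : ℂ) ^ (2 * i + k) := by
  have hq := hm_qne (F := F)
  have hq1 := hm_q1ne (F := F)
  obtain ⟨k, hk, hs⟩ := hm_chain (Lone F a b x).mulVecLin (Rone F a b x).mulVecLin v hv hL
    (fun m => hmt (Fintype.card F) a c (i + m) j)
    (fun m => by rw [hm_T_apply]; exact (hm_iterR1 h m).2) (a + 1) (by
      by_contra h0
      have := (hm_hom_bound hx (hm_iterR1 h (a + 1)).1 h0).1
      omega)
  refine ⟨k, hk, ?_⟩
  have h1 : (c * (Fintype.card F : ℂ) ^ a / (Fintype.card F : ℂ) ^ i) =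
      (Fintype.card F : ℂ) ^ i * (Fintype.card F : ℂ) ^ k := by
    refine hm_geo _ Fintype.card_pos _ _ k ?_
    have h2 : (Fintype.card F : ℂ) ^ j / ((Fintype.card F : ℂ) - 1) *
      ∑ m ∈ Finset.range (k + 1), ((c * (Fintype.card F : ℂ) ^ a / (Fintype.card F : ℂ) ^ i) /
        (Fintype.card F : ℂ) ^ m - (Fintype.card F : ℂ) ^ i * (Fintype.card F : ℂ) ^ m) = 0 := by
      rw [← hs, Finset.mul_sum]
      refine Finset.sum_congr rfl fun m _ => ?_
      unfold hmt
      rw [pow_add]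
      field_simp
    exact (mul_eq_zero.1 h2).resolve_left (div_ne_zero (pow_ne_zero _ hq) hq1)
  field_simp at h1
  rw [h1]; ring

lemma hm_down1 {c : ℂ} {i j : ℕ} {v : Submodule F (Fin (a + b) → F) → ℂ}
    (h : hmEig x c i j v) (hv : v ≠ 0) (hL : Rone F a b x *ᵥ v = 0) :
    ∃ k, k ≤ i ∧ (Lone F a b x).mulVecLin^[k] v ≠ 0 ∧
      c * (Fintype.card F : ℂ) ^ a * (Fintype.card F : ℂ) ^ k = (Fintype.card F : ℂ) ^ (2 * i) := by
  have hq := hm_qne (F := F)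
  have hq1 := hm_q1ne (F := F)
  obtain ⟨k, hk, hs⟩ := hm_chain (Rone F a b x).mulVecLin (Lone F a b x).mulVecLin v hv hL
    (fun m => - hmt (Fintype.card F) a c (i - m) j)
    (fun m => by
      rw [← neg_sub, hm_T_apply, neg_smul]
      rcases hm_iterL1 h m with h0 | h0
      · rw [h0]; simp
      · rw [h0.2.2]) (i + 1) (by
      rcases hm_iterL1 h (i + 1) with h0 | h0
      · exact h0
      · omega)
  have hki : k ≤ i := by
    rcases hm_iterL1 h k with h0 | h0
    · exact absurd h0 hk
    · exact h0.1
  refine ⟨k, hki, hk, ?_⟩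
  have h1 : (Fintype.card F : ℂ) ^ i = (c * (Fintype.card F : ℂ) ^ a / (Fintype.card F : ℂ) ^ i) *
       (Fintype.card F : ℂ) ^ k := by
    refine hm_geo _ Fintype.card_pos _ _ k ?_
    have h2 : (Fintype.card F : ℂ) ^ j / ((Fintype.card F : ℂ) - 1) *
      ∑ m ∈ Finset.range (k + 1), ((Fintype.card F : ℂ) ^ i / (Fintype.card F : ℂ) ^ m -
        (c * (Fintype.card F : ℂ) ^ a / (Fintype.card F : ℂ) ^ i) *
        (Fintype.card F : ℂ) ^ m) = 0 := by
      rw [← hs, Finset.mul_sum]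
      refine Finset.sum_congr rfl fun m hm => ?_
      have hm' : m ≤ i := by have := Finset.mem_range.1 hm; omega
      obtain ⟨d, rfl⟩ := Nat.exists_eq_add_of_le hm'
      unfold hmt
      rw [Nat.add_sub_cancel_left, pow_add]
      field_simp
      ring
    exact (mul_eq_zero.1 h2).resolve_left (div_ne_zero (pow_ne_zero _ hq) hq1)
  field_simp at h1
  rw [← h1]; ring

lemma hm_up2 (hx : finrank F x = a) {c : ℂ} {i j : ℕ} {v : Submodule F (Fin (a + b) → F) → ℂ}
    (h : hmEig x c i j v) (hv : v ≠ 0) (hL : Ltwo F a b x *ᵥ v = 0) :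
    ∃ k, (Rtwo F a b x).mulVecLin^[k] v ≠ 0 ∧
      (Fintype.card F : ℂ) ^ (a + b) =
        c * (Fintype.card F : ℂ) ^ a * (Fintype.card F : ℂ) ^ (2 * j + k) := by
  have hq := hm_qne (F := F)
  have hq1 := hm_q1ne (F := F)
  obtain ⟨k, hk, hs⟩ := hm_chain (Ltwo F a b x).mulVecLin (Rtwo F a b x).mulVecLin v hv hL
    (fun m => (hmD (Fintype.card F) (a + b) (i + (j + m)) - hmt (Fintype.card F) a c i (j + m)))
    (fun m => by rw [hm_T'_apply]; exact hm_eigT' (hm_iterR2 h m)) (b + 1) (by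
      by_contra h0
      have := (hm_hom_bound hx (hm_iterR2 h (b + 1)).1 h0).2
      omega)
  refine ⟨k, hk, ?_⟩
  have h1 : ((Fintype.card F : ℂ) ^ (a + b) / (Fintype.card F : ℂ) ^ (i + j)) =
      (c * (Fintype.card F : ℂ) ^ a * (Fintype.card F : ℂ) ^ j / (Fintype.card F : ℂ) ^ i) *
        (Fintype.card F : ℂ) ^ k := by
    refine hm_geo _ Fintype.card_pos _ _ k ?_
    have h2 : 1 / ((Fintype.card F : ℂ) - 1) *
      ∑ m ∈ Finset.range (k + 1), (((Fintype.card F : ℂ) ^ (a + b) / (Fintype.card F : ℂ) ^ (i + j)) /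
        (Fintype.card F : ℂ) ^ m - (c * (Fintype.card F : ℂ) ^ a * (Fintype.card F : ℂ) ^ j /
          (Fintype.card F : ℂ) ^ i) * (Fintype.card F : ℂ) ^ m) = 0 := by
      rw [← hs, Finset.mul_sum]
      refine Finset.sum_congr rfl fun m _ => ?_
      unfold hmt hmD
      simp only [pow_add]
      field_simp
      ring
    exact (mul_eq_zero.1 h2).resolve_left (div_ne_zero one_ne_zero hq1)
  rw [pow_add _ i j] at h1
  field_simp at h1
  rw [h1]; ring

variable (x) in
/-- the homogeneous component `(i,j)` of `W` is nonzero -/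
def hmOcc (W : Submodule ℂ (Submodule F (Fin (a + b) → F) → ℂ)) (i j : ℕ) : Prop :=
  ∃ f ∈ W, f ≠ 0 ∧ hmHom x i j f

variable {W : Submodule ℂ (Submodule F (Fin (a + b) → F) → ℂ)}

lemma hm_occ_bound (hx : finrank F x = a) {i j : ℕ} (h : hmOcc x W i j) : i ≤ a ∧ j ≤ b := by
  obtain ⟨f, _, h0, hf⟩ := h
  exact hm_hom_bound hx hf h0

lemma hm_nuset (hx : finrank F x = a) (h : MatStable (Halg F a b x) W) (i : ℕ) :
    W.map (∑ j ∈ Finset.range (b + 1), Estar F a b x i j).mulVecLin ≠ ⊥ ↔ ∃ j, hmOcc x W i j := by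
  constructor
  · intro hne
    obtain ⟨g, ⟨f, hf, rfl⟩, hg0⟩ := Submodule.exists_mem_ne_zero_of_ne_bot hne
    rw [Matrix.mulVecLin_apply, Matrix.sum_mulVec] at hg0
    obtain ⟨j, _, hj⟩ := Finset.exists_ne_zero_of_sum_ne_zero hg0
    exact ⟨j, _, hm_memE hx h i j hf, hj, hm_Estar_hom i j f⟩
  · rintro ⟨j, f, hf, h0, hom⟩ hbot
    have hb := hm_hom_bound hx hom h0
    have h1 : (∑ j ∈ Finset.range (b + 1), Estar F a b x i j).mulVecLin f ∈
      W.map (∑ j ∈ Finset.range (b + 1), Estar F a b x i j).mulVecLin := ⟨f, hf, rfl⟩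
    rw [hbot, Submodule.mem_bot, Matrix.mulVecLin_apply, Matrix.sum_mulVec,
      Finset.sum_eq_single j, hm_Estar_self hom] at h1
    · exact h0 h1
    · intro j' _ hj'
      exact hm_Estar_other hom (by omega)
    · intro hj
      simp only [Finset.mem_range] at hj; omega

lemma hm_muset (hx : finrank F x = a) (h : MatStable (Halg F a b x) W) (j : ℕ) :
    W.map (∑ i ∈ Finset.range (a + 1), Estar F a b x i j).mulVecLin ≠ ⊥ ↔ ∃ i, hmOcc x W i j := by
  constructor
  · intro hne
    obtain ⟨g, ⟨f, hf, rfl⟩, hg0⟩ := Submodule.exists_mem_ne_zero_of_ne_bot hne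
    rw [Matrix.mulVecLin_apply, Matrix.sum_mulVec] at hg0
    obtain ⟨i, _, hj⟩ := Finset.exists_ne_zero_of_sum_ne_zero hg0
    exact ⟨i, _, hm_memE hx h i j hf, hj, hm_Estar_hom i j f⟩
  · rintro ⟨i, f, hf, h0, hom⟩ hbot
    have hb := hm_hom_bound hx hom h0
    have h1 : (∑ i ∈ Finset.range (a + 1), Estar F a b x i j).mulVecLin f ∈
      W.map (∑ i ∈ Finset.range (a + 1), Estar F a b x i j).mulVecLin := ⟨f, hf, rfl⟩
    rw [hbot, Submodule.mem_bot, Matrix.mulVecLin_apply, Matrix.sum_mulVec,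
      Finset.sum_eq_single i, hm_Estar_self hom] at h1
    · exact h0 h1
    · intro j' _ hj'
      exact hm_Estar_other hom (by omega)
    · intro hj
      simp only [Finset.mem_range] at hj; omega

lemma hm_occ_ex (hx : finrank F x = a) (h : MatStable (Halg F a b x) W) (h0 : W ≠ ⊥) :
    ∃ i j, hmOcc x W i j := by
  obtain ⟨f, hf, hf0⟩ := Submodule.exists_mem_ne_zero_of_ne_bot h0
  obtain ⟨y, hy⟩ := Function.ne_iff.1 hf0
  have h1 := hm_leY (x := x) y
  refine ⟨finrank F ↥(x ⊓ y), finrank F y - finrank F ↥(x ⊓ y), _, hm_memE hx h _ _ hf, ?_,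
    hm_Estar_hom _ _ f⟩
  intro h2
  have h3 := congrFun h2 y
  rw [hm_Estar_apply, if_pos ⟨rfl, by omega⟩, one_mul] at h3
  exact hy h3

lemma hm_lowNu_att (hx : finrank F x = a) (h : MatStable (Halg F a b x) W) (h0 : W ≠ ⊥) :
    ∃ j, hmOcc x W (lowNu F a b x W) j := by
  obtain ⟨i, j, hij⟩ := hm_occ_ex hx h h0
  exact (hm_nuset hx h _).1 (Nat.sInf_mem (s := {i : ℕ | W.map (∑ j ∈ Finset.range (b + 1),
    Estar F a b x i j).mulVecLin ≠ ⊥}) ⟨i, (hm_nuset hx h i).2 ⟨j, hij⟩⟩)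

lemma hm_lowNu_le (hx : finrank F x = a) (h : MatStable (Halg F a b x) W) {i j : ℕ}
    (hij : hmOcc x W i j) : lowNu F a b x W ≤ i :=
  Nat.sInf_le ((hm_nuset hx h i).2 ⟨j, hij⟩)

lemma hm_lowMu_att (hx : finrank F x = a) (h : MatStable (Halg F a b x) W) (h0 : W ≠ ⊥) :
    ∃ i, hmOcc x W i (lowMu F a b x W) := by
  obtain ⟨i, j, hij⟩ := hm_occ_ex hx h h0
  exact (hm_muset hx h _).1 (Nat.sInf_mem (s := {j : ℕ | W.map (∑ i ∈ Finset.range (a + 1),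
    Estar F a b x i j).mulVecLin ≠ ⊥}) ⟨j, (hm_muset hx h j).2 ⟨i, hij⟩⟩)

lemma hm_lowMu_le (hx : finrank F x = a) (h : MatStable (Halg F a b x) W) {i j : ℕ}
    (hij : hmOcc x W i j) : lowMu F a b x W ≤ j :=
  Nat.sInf_le ((hm_muset hx h j).2 ⟨i, hij⟩)

lemma hm_upbdd (hx : finrank F x = a) (h : MatStable (Halg F a b x) W) :
    BddAbove {i : ℕ | W.map (∑ j ∈ Finset.range (b + 1), Estar F a b x i j).mulVecLin ≠ ⊥} := by
  refine ⟨a, fun i hi => ?_⟩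
  obtain ⟨j, hj⟩ := (hm_nuset hx h i).1 hi
  exact (hm_occ_bound hx hj).1

lemma hm_upNu_att (hx : finrank F x = a) (h : MatStable (Halg F a b x) W) (h0 : W ≠ ⊥) :
    ∃ j, hmOcc x W (upNu F a b x W) j := by
  obtain ⟨i, j, hij⟩ := hm_occ_ex hx h h0
  exact (hm_nuset hx h _).1 (Nat.sSup_mem ⟨i, (hm_nuset hx h i).2 ⟨j, hij⟩⟩ (hm_upbdd hx h))

lemma hm_le_upNu (hx : finrank F x = a) (h : MatStable (Halg F a b x) W) {i j : ℕ}
    (hij : hmOcc x W i j) : i ≤ upNu F a b x W :=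
  le_csSup (hm_upbdd hx h) ((hm_nuset hx h i).2 ⟨j, hij⟩)

lemma hm_iter_mem (h : MatStable (Halg F a b x) W) {M} (hM : M ∈ Halg F a b x) {f} (hf : f ∈ W)
    (k : ℕ) : M.mulVecLin^[k] f ∈ W := by
  induction k with
  | zero => exact hf
  | succ k ih => rw [Function.iterate_succ_apply']; exact hm_stable_mem h hM ih

lemma hm_qpow_inj {m n : ℕ} (h : (Fintype.card F : ℂ) ^ m = (Fintype.card F : ℂ) ^ n) : m = n := by
  have h1 : Fintype.card F ^ m = Fintype.card F ^ n := by exact_mod_cast h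
  exact Nat.pow_right_injective hm_q_gt h1

/-- the key numerical constraints -/
lemma hm_Q (hx : finrank F x = a) (h : MatStable (Halg F a b x) W) (h0 : W ≠ ⊥) {c : ℂ}
    (hc : W ≤ hmK x c) : c * (Fintype.card F : ℂ) ^ a =
      (Fintype.card F : ℂ) ^ (lowNu F a b x W + upNu F a b x W) := by
  obtain ⟨j, v, hv, hv0, hvh⟩ := hm_lowNu_att hx h h0
  have hL : Lone F a b x *ᵥ v = 0 := by
    generalize hn : lowNu F a b x W = n at hvh
    cases n with
    | zero => exact hm_homL1z hvh
    | succ n =>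
      by_contra h1
      have := hm_lowNu_le hx h ⟨_, hm_stable_mem h hm_memL1 hv, h1, hm_homL1 hvh⟩
      omega
  obtain ⟨k, hk, hk2⟩ := hm_up1 hx (hm_K_eig (hc hv) hvh) hv0 hL
  have hk3 := hm_le_upNu hx h ⟨_, hm_iter_mem h hm_memR1 hv k, hk,
    (hm_iterR1 (hm_K_eig (hc hv) hvh) k).1⟩
  obtain ⟨j', v', hv', hv0', hvh'⟩ := hm_upNu_att hx h h0
  have hR : Rone F a b x *ᵥ v' = 0 := by
    by_contra h1
    have := hm_le_upNu hx h ⟨_, hm_stable_mem h hm_memR1 hv', h1, hm_homR1 hvh'⟩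
    omega
  obtain ⟨l, hli, hl, hl2⟩ := hm_down1 (hm_K_eig (hc hv') hvh') hv0' hR
  have hl3 : lowNu F a b x W ≤ upNu F a b x W - l := by
    rcases hm_iterL1 (hm_K_eig (hc hv') hvh') l with h1 | h1
    · exact absurd h1 hl
    · exact hm_lowNu_le hx h ⟨_, hm_iter_mem h hm_memL1 hv' l, hl, h1.2.1⟩
  rw [hk2, ← pow_add] at hl2
  have := hm_qpow_inj hl2
  rw [hk2]
  congr 1
  omega

lemma hm_Q2 (hx : finrank F x = a) (h : MatStable (Halg F a b x) W) (h0 : W ≠ ⊥) {c : ℂ}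
    (hc : W ≤ hmK x c) : ∃ k, lowMu F a b x W + k ≤ b ∧ (Fintype.card F : ℂ) ^ (a + b) =
        c * (Fintype.card F : ℂ) ^ a * (Fintype.card F : ℂ) ^ (2 * lowMu F a b x W + k) := by
  obtain ⟨i, v, hv, hv0, hvh⟩ := hm_lowMu_att hx h h0
  have hL : Ltwo F a b x *ᵥ v = 0 := by
    generalize hn : lowMu F a b x W = n at hvh
    cases n with
    | zero => exact hm_homL2z hvh
    | succ n =>
      by_contra h1
      have := hm_lowMu_le hx h ⟨_, hm_stable_mem h hm_memL2 hv, h1, hm_homL2 hvh⟩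
      omega
  obtain ⟨k, hk, hk2⟩ := hm_up2 hx (hm_K_eig (hc hv) hvh) hv0 hL
  exact ⟨k, (hm_hom_bound hx (hm_iterR2 (hm_K_eig (hc hv) hvh) k).1 hk).2, hk2⟩

end Chains

section Forward

open Matrix

variable {F : Type} [Field F] [Fintype F] {a b : ℕ}
variable {x : Submodule F (Fin (a + b) → F)}

lemma hm_upset (x y u : Submodule F (Fin (a + b) → F)) :
    (y ≤ u ∧ finrank F y + 1 = finrank F u ∧ finrank F ↥(x ⊓ y) + 1 = finrank F ↥(x ⊓ u)) ↔
      (y ≤ u ∧ u ≤ y ⊔ x ∧ finrank F y + 1 = finrank F u) := by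
  have key : y ≤ u → finrank F ↥(y ⊔ (x ⊓ u)) + finrank F ↥(x ⊓ y) =
      finrank F y + finrank F ↥(x ⊓ u) := by
    intro h
    have h1 := Submodule.finrank_sup_add_finrank_inf_eq y (x ⊓ u)
    have h2 : y ⊓ (x ⊓ u) = x ⊓ y := by
      rw [inf_left_comm, inf_eq_left.2 h]
    rwa [h2] at h1
  constructor
  · rintro ⟨h1, h2, h3⟩
    refine ⟨h1, ?_, h2⟩
    have h4 := key h1
    have h5 : y ⊔ (x ⊓ u) = u :=
      Submodule.eq_of_le_of_finrank_le (sup_le h1 inf_le_right) (by omega)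
    rw [← h5]
    exact sup_le_sup_left inf_le_left _
  · rintro ⟨h1, h2, h3⟩
    refine ⟨h1, h3, ?_⟩
    have h4 := key h1
    have h5 : y ⊔ (x ⊓ u) = u := by
      rw [← sup_inf_assoc_of_le x h1, inf_eq_right.2 h2]
    rw [h5] at h4
    omega

lemma hm_sum_ncard1 {ι : Type} [Fintype ι] (p : ι → Prop) [DecidablePred p] :
    ∑ u, (if p u then (1 : ℂ) else 0) = (({u | p u}.ncard : ℝ) : ℂ) := by
  have := hm_sum_ncard p p
  simp only [and_self] at this
  rw [← this]
  refine Finset.sum_congr rfl fun u _ => ?_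
  split_ifs <;> simp

lemma hm_rowL1 (hx : finrank F x = a) (y : Submodule F (Fin (a + b) → F)) :
    ∑ u, Lone F a b x y u = ((Fintype.card F : ℂ) ^ a / (Fintype.card F : ℂ) ^ finrank F ↥(x ⊓ y) - 1)
      / ((Fintype.card F : ℂ) - 1) := by
  classical
  unfold Lone
  rw [hm_sum_ncard1]
  have h1 := hm_count_upC y (y ⊔ x) le_sup_left
  have h2 : {u | y ≤ u ∧ finrank F y + 1 = finrank F u ∧
    finrank F ↥(x ⊓ y) + 1 = finrank F ↥(x ⊓ u)} =
    {u | y ≤ u ∧ u ≤ y ⊔ x ∧ finrank F y + 1 = finrank F u} := by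
    ext u; exact hm_upset x y u
  rw [h2, h1]
  have h3 := Submodule.finrank_sup_add_finrank_inf_eq y x
  rw [inf_comm, hx] at h3
  have hq := hm_qne (F := F)
  push_cast
  congr 2
  rw [div_eq_div_iff (pow_ne_zero _ hq) (pow_ne_zero _ hq), ← pow_add, ← pow_add, h3, add_comm]

lemma hm_rowR1 (x y : Submodule F (Fin (a + b) → F)) :
    ∑ u, Rone F a b x y u = ((Fintype.card F : ℂ) ^ finrank F y -
      (Fintype.card F : ℂ) ^ finrank F y / (Fintype.card F : ℂ) ^ finrank F ↥(x ⊓ y))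
      / ((Fintype.card F : ℂ) - 1) := by
  classical
  unfold Rone
  rw [hm_sum_ncard1]
  have h1 := hm_count_downC ⊥ y bot_le
  have h2 := hm_count_downC (x ⊓ y) y inf_le_right
  rw [← Set.ncard_inter_add_ncard_sdiff_eq_ncard _ {u | x ⊓ y ≤ u} (Set.toFinite _)] at h1
  have e1 : {u | ⊥ ≤ u ∧ u ≤ y ∧ finrank F u + 1 = finrank F y} ∩ {u | x ⊓ y ≤ u} =
    {u | x ⊓ y ≤ u ∧ u ≤ y ∧ finrank F u + 1 = finrank F y} := by
    ext u; simp only [Set.mem_inter_iff, Set.mem_ofPred_eq, bot_le]; tauto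
  have e2 : {u | ⊥ ≤ u ∧ u ≤ y ∧ finrank F u + 1 = finrank F y} \ {u | x ⊓ y ≤ u} =
    {u | u ≤ y ∧ finrank F u + 1 = finrank F y ∧ finrank F ↥(x ⊓ u) + 1 = finrank F ↥(x ⊓ y)} := by
    ext u
    simp only [Set.mem_sdiff, Set.mem_ofPred_eq, bot_le, true_and]
    constructor
    · rintro ⟨⟨h3, h4⟩, h5⟩
      refine ⟨h3, h4, ?_⟩
      have e1 := hm_bmono x h3
      have f1 := hm_xmono x h3
      by_contra h6
      apply h5
      have : x ⊓ u = x ⊓ y :=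
        Submodule.eq_of_le_of_finrank_le (inf_le_inf_left x h3) (by omega)
      rw [← this]
      exact inf_le_right
    · rintro ⟨h3, h4, h5⟩
      refine ⟨⟨h3, h4⟩, fun h6 => ?_⟩
      have : finrank F ↥(x ⊓ y) ≤ finrank F ↥(x ⊓ u) :=
        Submodule.finrank_mono (le_inf inf_le_left h6)
      omega
  rw [e1, e2] at h1
  push_cast at h1
  rw [h2, finrank_bot, pow_zero, div_one] at h1
  rw [eq_sub_of_add_eq' h1]
  push_cast
  rw [← sub_div]
  congr 1
  ring

lemma hm_rowT (hx : finrank F x = a) {i j : ℕ} (y : Submodule F (Fin (a + b) → F))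
    (h1 : finrank F ↥(x ⊓ y) = i) (h2 : finrank F y = i + j) :
    ∑ z, hmT x y z = hmt (Fintype.card F) a 1 i j := by
  have hq := hm_qne (F := F)
  have hq1 := hm_q1ne (F := F)
  have eA : ∑ z, (Lone F a b x * Rone F a b x) y z =
      (∑ u, Lone F a b x y u) * (((Fintype.card F : ℂ) ^ (i + 1 + j) -
      (Fintype.card F : ℂ) ^ (i + 1 + j) / (Fintype.card F : ℂ) ^ (i + 1))
      / ((Fintype.card F : ℂ) - 1)) := by
    simp only [Matrix.mul_apply]
    rw [Finset.sum_comm, Finset.sum_mul]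
    refine Finset.sum_congr rfl fun u _ => ?_
    rw [← Finset.mul_sum, hm_rowR1]
    unfold Lone
    split_ifs with h
    · rw [← h.2.1, ← h.2.2, h1, h2, add_right_comm]
    · rw [zero_mul, zero_mul]
  have eB : ∑ z, (Rone F a b x * Lone F a b x) y z =
      (∑ u, Rone F a b x y u) * (((Fintype.card F : ℂ) ^ a * (Fintype.card F : ℂ) /
      (Fintype.card F : ℂ) ^ i - 1) / ((Fintype.card F : ℂ) - 1)) := by
    simp only [Matrix.mul_apply]
    rw [Finset.sum_comm, Finset.sum_mul]
    refine Finset.sum_congr rfl fun u _ => ?_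
    rw [← Finset.mul_sum, hm_rowL1 hx]
    unfold Rone
    split_ifs with h
    · rw [← h1, ← h.2.2, pow_succ]
      congr 3
      field_simp
    · rw [zero_mul, zero_mul]
  unfold hmT
  simp only [Matrix.sub_apply]
  rw [Finset.sum_sub_distrib, eA, eB, hm_rowL1 hx, hm_rowR1, h1, h2]
  unfold hmt
  simp only [pow_add, pow_one]
  field_simp
  ring

lemma hm_Toff {y z : Submodule F (Fin (a + b) → F)} (h : y ≠ z) :
    ∃ n : ℕ, hmT x y z = n := by
  obtain ⟨A, B, C, D, h1, h2, h3, h4, h5, h6⟩ := hm_offdiag x h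
  refine ⟨A - B, ?_⟩
  unfold hmT
  rw [Matrix.sub_apply, h1, h2, Nat.cast_sub h5]

/-- bound on eigenvalues of `T` on the `(i,j)` component -/
lemma hm_eig_bound (hx : finrank F x = a) {i j : ℕ} {v : Submodule F (Fin (a + b) → F) → ℂ}
    (hv : v ≠ 0) (hh : hmHom x i j v) {t : ℂ} (ht : hmT x *ᵥ v = t • v) :
    t.re ≤ (hmt (Fintype.card F) a 1 i j).re := by
  classical
  obtain ⟨y0, hy0⟩ := Finite.exists_max (fun y => ‖v y‖)
  have hne : v y0 ≠ 0 := by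
    intro h0
    apply hv
    ext y
    have := hy0 y
    rw [h0, norm_zero] at this
    exact norm_le_zero_iff.1 this
  have hpos : 0 < ‖v y0‖ := norm_pos_iff.2 hne
  obtain ⟨h1, h2⟩ := hh y0 hne
  rw [← hm_rowT hx y0 h1 h2]
  have e1 := congrFun ht y0
  rw [Pi.smul_apply, smul_eq_mul] at e1
  change ∑ z, hmT x y0 z * v z = t * v y0 at e1
  rw [← Finset.add_sum_erase _ _ (Finset.mem_univ y0)] at e1 ⊢
  have e2 : (t - hmT x y0 y0) * v y0 = ∑ z ∈ Finset.univ.erase y0, hmT x y0 z * v z := by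
    rw [sub_mul, ← e1]; ring
  have e3 : ‖t - hmT x y0 y0‖ * ‖v y0‖ ≤ (∑ z ∈ Finset.univ.erase y0, (hmT x y0 z).re) * ‖v y0‖ := by
    rw [← norm_mul, e2, Finset.sum_mul]
    refine (norm_sum_le _ _).trans (Finset.sum_le_sum fun z hz => ?_)
    obtain ⟨n, hn⟩ := hm_Toff (x := x) (Finset.ne_of_mem_erase hz).symm
    rw [norm_mul, hn, Complex.norm_natCast, Complex.natCast_re]
    exact mul_le_mul_of_nonneg_left (hy0 z) (Nat.cast_nonneg n)
  have e4 := le_of_mul_le_mul_right e3 hpos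
  have e5 := (Complex.re_le_norm _).trans e4
  rw [Complex.sub_re] at e5
  rw [Complex.add_re, Complex.re_sum]
  linarith

variable {W : Submodule ℂ (Submodule F (Fin (a + b) → F) → ℂ)}

/-- existence of a homogeneous eigenvector -/
lemma hm_eig_ex {i j : ℕ} (h : MatStable (Halg F a b x) W) (ho : hmOcc x W i j) :
    ∃ v ∈ W, v ≠ 0 ∧ ∃ c, hmEig x c i j v := by
  obtain ⟨f, hf, hf0, hfh⟩ := ho
  let U : Submodule ℂ (Submodule F (Fin (a + b) → F) → ℂ) :=
    W ⊓ LinearMap.ker ((Estar F a b x i j).mulVecLin - LinearMap.id)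
  have hU : ∀ g, g ∈ U ↔ g ∈ W ∧ hmHom x i j g := by
    intro g
    simp only [U, Submodule.mem_inf, LinearMap.mem_ker, LinearMap.sub_apply,
      Matrix.mulVecLin_apply, LinearMap.id_apply]
    refine and_congr_right fun _ => ⟨fun hg => ?_, fun hg => ?_⟩
    · rw [← sub_eq_zero.1 hg]; exact hm_Estar_hom _ _ _
    · rw [hm_Estar_self hg, sub_self]
  have hT : ∀ g ∈ U, (hmT x).mulVecLin g ∈ U := by
    intro g hg
    rw [hU] at hg ⊢
    exact ⟨hm_stable_mem h hm_memT hg.1, hm_homT hg.2⟩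
  have : Nontrivial U := ⟨⟨⟨f, (hU f).2 ⟨hf, hfh⟩⟩, 0, fun h => hf0 (congrArg Subtype.val h)⟩⟩
  obtain ⟨t, ht⟩ := Module.End.exists_eigenvalue ((hmT x).mulVecLin.restrict hT)
  obtain ⟨v, hv⟩ := ht.exists_hasEigenvector
  have hv1 := congrArg Subtype.val hv.apply_eq_smul
  have hvU := (hU _).1 v.2
  have hq := hm_qne (F := F)
  have hq1 := hm_q1ne (F := F)
  refine ⟨v.1, hvU.1, fun h => hv.2 (Subtype.ext h), ((t * (Fintype.card F - 1) /
    (Fintype.card F : ℂ) ^ j + (Fintype.card F : ℂ) ^ i) * (Fintype.card F : ℂ) ^ i /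
      (Fintype.card F : ℂ) ^ a), hvU.2, ?_⟩
  have : hmT x *ᵥ v.1 = t • v.1 := hv1
  rw [this]
  congr 1
  unfold hmt
  field_simp
  ring

lemma hm_forward (hx : finrank F x = a) (h : MatSimple (Halg F a b x) W) :
    lowNu F a b x W ≤ a ∧ lowMu F a b x W ≤ b ∧
      max 0 (2 * (lowMu F a b x W : ℤ) - b) ≤ idxH F a b x W ∧
      idxH F a b x W ≤ min ((a : ℤ) - 2 * lowNu F a b x W) (lowMu F a b x W : ℤ) := by
  obtain ⟨hs, h0, hsimp⟩ := h
  obtain ⟨i, j, ho⟩ := hm_occ_ex hx hs h0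
  obtain ⟨v, hv, hv0, c, hc⟩ := hm_eig_ex hs ho
  have hvK : v ∈ hmK x c := Submodule.subset_span ⟨i, j, hc⟩
  have hK : W ≤ hmK x c := by
    have hst : MatStable (Halg F a b x) (W ⊓ hmK x c) := by
      intro M hM
      exact le_inf ((Submodule.map_mono inf_le_left).trans (hs M hM))
        ((Submodule.map_mono inf_le_right).trans (hm_K_stable c M hM))
    rcases hsimp _ inf_le_left hst with h1 | h1
    · exfalso
      have : v ∈ W ⊓ hmK x c := ⟨hv, hvK⟩
      rw [h1] at this
      exact hv0 this
    · rw [← h1]; exact inf_le_right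
  have hQ := hm_Q hx hs h0 hK
  obtain ⟨k, hk1, hk2⟩ := hm_Q2 hx hs h0 hK
  rw [hQ, ← pow_add] at hk2
  have hk3 := hm_qpow_inj hk2
  obtain ⟨j1, o1⟩ := hm_lowNu_att hx hs h0
  have h3 := hm_le_upNu hx hs o1
  have h4 := (hm_occ_bound hx o1).1
  have h5 : lowNu F a b x W + upNu F a b x W ≤ a := by
    have hb := hm_eig_bound hx hv0 hc.1 hc.2
    unfold hmt at hb
    rw [hQ, one_mul] at hb
    have hq2 := hm_q_gt (F := F)
    have hqr : (1 : ℝ) < Fintype.card F := by exact_mod_cast hq2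
    have hre : ∀ n : ℕ, ((Fintype.card F : ℂ) ^ j * ((Fintype.card F : ℂ) ^ n /
      (Fintype.card F : ℂ) ^ i - (Fintype.card F : ℂ) ^ i) / ((Fintype.card F : ℂ) - 1)).re =
      (Fintype.card F : ℝ) ^ j * ((Fintype.card F : ℝ) ^ n /
      (Fintype.card F : ℝ) ^ i - (Fintype.card F : ℝ) ^ i) / ((Fintype.card F : ℝ) - 1) := by
      intro n
      rw [← Complex.ofReal_re ((Fintype.card F : ℝ) ^ j * ((Fintype.card F : ℝ) ^ n /
      (Fintype.card F : ℝ) ^ i - (Fintype.card F : ℝ) ^ i) / ((Fintype.card F : ℝ) - 1))]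
      push_cast
      rfl
    rw [hre, hre] at hb
    have hq0 : (0 : ℝ) < Fintype.card F := by linarith
    rw [div_le_div_iff_of_pos_right (by linarith), mul_le_mul_iff_right₀ (by positivity),
      sub_le_sub_iff_right, div_le_div_iff_of_pos_right (by positivity)] at hb
    exact (pow_le_pow_iff_right₀ hqr).1 hb
  have h6 : lowMu F a b x W ≤ b := by omega
  refine ⟨h4, h6, ?_, ?_⟩
  · unfold idxH
    rw [max_le_iff]
    omega
  · unfold idxH
    rw [le_min_iff]
    omega

end Forward

section Generated

open Matrix

variable {F : Type} [Field F] [Fintype F] {a b : ℕ}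

/-- vectors obtained from `w` by raising -/
inductive hmGen (x : Submodule F (Fin (a + b) → F)) (w : Submodule F (Fin (a + b) → F) → ℂ)
    (ν μ : ℕ) : ℕ → ℕ → (Submodule F (Fin (a + b) → F) → ℂ) → Prop
  | base : hmGen x w ν μ ν μ w
  | r1 {i j : ℕ} {v} : hmGen x w ν μ i j v → hmGen x w ν μ (i + 1) j (Rone F a b x *ᵥ v)
  | r2 {i j : ℕ} {v} : hmGen x w ν μ i j v → hmGen x w ν μ i (j + 1) (Rtwo F a b x *ᵥ v)

variable {x : Submodule F (Fin (a + b) → F)} {w : Submodule F (Fin (a + b) → F) → ℂ} {ν μ : ℕ}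
variable {c : ℂ}

variable (x w ν μ) in
/-- the module generated by `w` -/
noncomputable def hmM : Submodule ℂ (Submodule F (Fin (a + b) → F) → ℂ) :=
  Submodule.span ℂ {v | ∃ i j, hmGen x w ν μ i j v}

lemma hm_gen_eig (hw : hmEig x c ν μ w) {i j : ℕ} {v} (h : hmGen x w ν μ i j v) :
    hmEig x c i j v := by
  induction h with
  | base => exact hw
  | r1 _ ih => exact hm_eigR1 ih
  | r2 _ ih => exact hm_eigR2 ih

lemma hm_gen_mem {i j : ℕ} {v} (h : hmGen x w ν μ i j v) : v ∈ hmM x w ν μ :=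
  Submodule.subset_span ⟨i, j, h⟩

lemma hm_M_R1 : ∀ f ∈ hmM x w ν μ, Rone F a b x *ᵥ f ∈ hmM x w ν μ := by
  refine hm_span_closed _ (Rone F a b x).mulVecLin ?_
  rintro f ⟨i, j, h⟩
  exact hm_gen_mem h.r1

lemma hm_M_R2 : ∀ f ∈ hmM x w ν μ, Rtwo F a b x *ᵥ f ∈ hmM x w ν μ := by
  refine hm_span_closed _ (Rtwo F a b x).mulVecLin ?_
  rintro f ⟨i, j, h⟩
  exact hm_gen_mem h.r2

lemma hm_gen_L (hw : hmEig x c ν μ w) (h1 : Lone F a b x *ᵥ w = 0) (h2 : Ltwo F a b x *ᵥ w = 0)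
    {i j : ℕ} {v} (h : hmGen x w ν μ i j v) :
    Lone F a b x *ᵥ v ∈ hmM x w ν μ ∧ Ltwo F a b x *ᵥ v ∈ hmM x w ν μ := by
  induction h with
  | base => rw [h1, h2]; exact ⟨Submodule.zero_mem _, Submodule.zero_mem _⟩
  | @r1 i j v h ih =>
    constructor
    · have := hm_T_apply (x := x) v
      simp only [Matrix.mulVecLin_apply] at this
      rw [sub_eq_iff_eq_add.1 this, (hm_gen_eig hw h).2]
      exact Submodule.add_mem _ (Submodule.smul_mem _ _ (hm_gen_mem h)) (hm_M_R1 _ ih.1)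
    · rw [Matrix.mulVec_mulVec, hm_rel1', ← Matrix.mulVec_mulVec]
      exact hm_M_R1 _ ih.2
  | @r2 i j v h ih =>
    constructor
    · rw [Matrix.mulVec_mulVec, hm_rel1, ← Matrix.mulVec_mulVec]
      exact hm_M_R2 _ ih.1
    · have := hm_T'_apply (x := x) v
      simp only [Matrix.mulVecLin_apply] at this
      rw [sub_eq_iff_eq_add.1 this, hm_eigT' (hm_gen_eig hw h)]
      exact Submodule.add_mem _ (Submodule.smul_mem _ _ (hm_gen_mem h)) (hm_M_R2 _ ih.2)

lemma hm_M_stable (hw : hmEig x c ν μ w) (h1 : Lone F a b x *ᵥ w = 0)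
    (h2 : Ltwo F a b x *ᵥ w = 0) : MatStable (Halg F a b x) (hmM x w ν μ) := by
  apply hm_stable_of
  · refine hm_span_closed _ (Lone F a b x).mulVecLin ?_
    rintro f ⟨i, j, h⟩
    exact (hm_gen_L hw h1 h2 h).1
  · refine hm_span_closed _ (Ltwo F a b x).mulVecLin ?_
    rintro f ⟨i, j, h⟩
    exact (hm_gen_L hw h1 h2 h).2
  · exact hm_M_R1
  · exact hm_M_R2
  · intro k l
    refine hm_span_closed _ (Estar F a b x k l).mulVecLin ?_
    rintro f ⟨i, j, h⟩
    rw [Matrix.mulVecLin_apply]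
    by_cases hkl : k = i ∧ l = j
    · obtain ⟨rfl, rfl⟩ := hkl
      rw [hm_Estar_self (hm_gen_eig hw h).1]
      exact hm_gen_mem h
    · rw [hm_Estar_other (hm_gen_eig hw h).1 hkl]; exact Submodule.zero_mem _

lemma hm_gen_ge {i j : ℕ} {v} (h : hmGen x w ν μ i j v) :
    ν ≤ i ∧ μ ≤ j ∧ (i = ν → j = μ → v = w) := by
  induction h with
  | base => exact ⟨le_rfl, le_rfl, fun _ _ => rfl⟩
  | r1 _ ih => refine ⟨by omega, ih.2.1, fun h => by omega⟩
  | r2 _ ih => refine ⟨ih.1, by omega, fun _ h => by omega⟩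

/-- projections of the generated module -/
lemma hm_M_E (hw : hmEig x c ν μ w) (k l : ℕ) {f} (hf : f ∈ hmM x w ν μ) :
    (¬ (ν ≤ k ∧ μ ≤ l) → Estar F a b x k l *ᵥ f = 0) ∧
    Estar F a b x ν μ *ᵥ f ∈ Submodule.span ℂ {w} := by
  constructor
  · intro hkl
    have : hmM x w ν μ ≤ LinearMap.ker (Estar F a b x k l).mulVecLin := by
      refine Submodule.span_le.2 ?_
      rintro g ⟨i, j, h⟩
      have h1 := hm_gen_ge h
      exact hm_Estar_other (hm_gen_eig hw h).1 (by omega)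
    exact this hf
  · have : hmM x w ν μ ≤ (Submodule.span ℂ {w}).comap (Estar F a b x ν μ).mulVecLin := by
      refine Submodule.span_le.2 ?_
      rintro g ⟨i, j, h⟩
      have h1 := hm_gen_ge h
      change Estar F a b x ν μ *ᵥ g ∈ Submodule.span ℂ {w}
      by_cases hij : ν = i ∧ μ = j
      · obtain ⟨rfl, rfl⟩ := hij
        rw [hm_Estar_self (hm_gen_eig hw h).1, h1.2.2 rfl rfl]
        exact Submodule.mem_span_singleton_self w
      · rw [hm_Estar_other (hm_gen_eig hw h).1 hij]; exact Submodule.zero_mem _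
    exact this hf

/-- hermitian pairing -/
noncomputable def hmP (f g : Submodule F (Fin (a + b) → F) → ℂ) : ℂ := star f ⬝ᵥ g

lemma hm_pair_R1 (f g : Submodule F (Fin (a + b) → F) → ℂ) :
    star (Rone F a b x *ᵥ f) ⬝ᵥ g = star f ⬝ᵥ (Lone F a b x *ᵥ g) := by
  rw [Matrix.star_mulVec, ← Matrix.dotProduct_mulVec]
  congr 2
  ext y z
  rw [Matrix.conjTranspose_apply]
  unfold Rone Lone
  split_ifs <;> simp

lemma hm_pair_R2 (f g : Submodule F (Fin (a + b) → F) → ℂ) :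
    star (Rtwo F a b x *ᵥ f) ⬝ᵥ g = star f ⬝ᵥ (Ltwo F a b x *ᵥ g) := by
  rw [Matrix.star_mulVec, ← Matrix.dotProduct_mulVec]
  congr 2
  ext y z
  rw [Matrix.conjTranspose_apply]
  unfold Rtwo Ltwo
  split_ifs <;> simp

lemma hm_pair_E (hw : hmHom x ν μ w) (g : Submodule F (Fin (a + b) → F) → ℂ) :
    star w ⬝ᵥ g = star w ⬝ᵥ (Estar F a b x ν μ *ᵥ g) := by
  simp only [dotProduct]
  refine Finset.sum_congr rfl fun y _ => ?_
  rw [hm_Estar_apply]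
  by_cases h : w y = 0
  · rw [Pi.star_apply, h]; simp
  · rw [if_pos (hw y h), one_mul]

lemma hm_M_simple (hx : finrank F x = a) (hw0 : w ≠ 0) (hw : hmEig x c ν μ w)
    (h1 : Lone F a b x *ᵥ w = 0) (h2 : Ltwo F a b x *ᵥ w = 0) :
    MatSimple (Halg F a b x) (hmM x w ν μ) := by
  refine ⟨hm_M_stable hw h1 h2, ?_, ?_⟩
  · intro h
    have : w ∈ hmM x w ν μ := hm_gen_mem hmGen.base
    rw [h] at this
    exact hw0 this
  · intro U hU hst
    by_cases hwU : w ∈ U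
    · right
      refine le_antisymm hU (Submodule.span_le.2 ?_)
      rintro v ⟨i, j, h⟩
      induction h with
      | base => exact hwU
      | r1 _ ih => exact hm_stable_mem hst hm_memR1 ih
      | r2 _ ih => exact hm_stable_mem hst hm_memR2 ih
    · left
      have hE : ∀ u ∈ U, Estar F a b x ν μ *ᵥ u = 0 := by
        intro u hu
        obtain ⟨r, hr⟩ := Submodule.mem_span_singleton.1 (hm_M_E hw 0 0 (hU hu)).2
        by_cases hr0 : r = 0
        · rw [← hr, hr0, zero_smul]
        · exfalso
          apply hwU
          have h3 := hm_memE hx hst ν μ hu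
          rw [← hr] at h3
          exact (Submodule.smul_mem_iff _ hr0).1 h3
      have hG : ∀ {i j : ℕ} {v}, hmGen x w ν μ i j v → ∀ u ∈ U, star v ⬝ᵥ u = 0 := by
        intro i j v h
        induction h with
        | base =>
          intro u hu
          rw [hm_pair_E hw.1, hE u hu, dotProduct_zero]
        | r1 _ ih =>
          intro u hu
          rw [hm_pair_R1]
          exact ih _ (hm_stable_mem hst hm_memL1 hu)
        | r2 _ ih =>
          intro u hu
          rw [hm_pair_R2]
          exact ih _ (hm_stable_mem hst hm_memL2 hu)
      have hM : ∀ m ∈ hmM x w ν μ, ∀ u ∈ U, star m ⬝ᵥ u = 0 := by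
        intro m hm u hu
        induction hm using Submodule.span_induction with
        | mem v hv => obtain ⟨i, j, h⟩ := hv; exact hG h u hu
        | zero => rw [star_zero, zero_dotProduct]
        | add m n _ _ hm hn => rw [star_add, add_dotProduct, hm, hn, add_zero]
        | smul r m _ hm => rw [star_smul, smul_dotProduct, hm, smul_zero]
      rw [Submodule.eq_bot_iff]
      intro u hu
      open ComplexOrder in
      exact dotProduct_star_self_eq_zero.1 (hM u (hU hu) u hu)

lemma hm_backward (hx : finrank F x = a) (hw0 : w ≠ 0) {ρ : ℕ}
    (hw : hmEig x ((Fintype.card F : ℂ) ^ ρ)⁻¹ ν μ w) (hρ : ν + ρ ≤ a)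
    (h1 : Lone F a b x *ᵥ w = 0) (h2 : Ltwo F a b x *ᵥ w = 0) :
    ∃ W : Submodule ℂ (Submodule F (Fin (a + b) → F) → ℂ), MatSimple (Halg F a b x) W ∧
        lowNu F a b x W = ν ∧ lowMu F a b x W = μ ∧ idxH F a b x W = ρ := by
  have hs := hm_M_simple hx hw0 hw h1 h2
  have hwM : w ∈ hmM x w ν μ := hm_gen_mem hmGen.base
  have hocc : hmOcc x (hmM x w ν μ) ν μ := ⟨w, hwM, hw0, hw.1⟩
  have hge : ∀ i j, hmOcc x (hmM x w ν μ) i j → ν ≤ i ∧ μ ≤ j := by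
    rintro i j ⟨f, hf, hf0, hfh⟩
    by_contra h
    have := (hm_M_E hw i j hf).1 h
    rw [hm_Estar_self hfh] at this
    exact hf0 this
  have hN : lowNu F a b x (hmM x w ν μ) = ν := by
    refine le_antisymm (hm_lowNu_le hx hs.1 hocc) ?_
    obtain ⟨j, hj⟩ := hm_lowNu_att hx hs.1 hs.2.1
    exact (hge _ _ hj).1
  have hMu : lowMu F a b x (hmM x w ν μ) = μ := by
    refine le_antisymm (hm_lowMu_le hx hs.1 hocc) ?_
    obtain ⟨j, hj⟩ := hm_lowMu_att hx hs.1 hs.2.1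
    exact (hge _ _ hj).2
  refine ⟨_, hs, hN, hMu, ?_⟩
  have hK : hmM x w ν μ ≤ hmK x ((Fintype.card F : ℂ) ^ ρ)⁻¹ := by
    refine Submodule.span_le.2 ?_
    rintro v ⟨i, j, h⟩
    exact Submodule.subset_span ⟨i, j, hm_gen_eig hw h⟩
  have hQ := hm_Q hx hs.1 hs.2.1 hK
  rw [hN] at hQ
  have hq := hm_qne (F := F)
  have h3 : (Fintype.card F : ℂ) ^ a =
    (Fintype.card F : ℂ) ^ (ρ + (ν + upNu F a b x (hmM x w ν μ))) := by
    rw [pow_add, ← hQ]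
    field_simp
  have := hm_qpow_inj h3
  unfold idxH
  rw [hN]
  omega

end Generated

section Weights

variable {F : Type} [Field F] [Fintype F]
variable {V : Type} [AddCommGroup V] [Module F V] [FiniteDimensional F V]

/-- data used for constructing a highest weight vector -/
structure hmSetup (x Y Z : Submodule F V) (p K : V →ₗ[F] V) : Prop where
  pY : ∀ y ∈ Y, p y = y
  pZ : ∀ z ∈ Z, p z = 0
  pr : ∀ v, p v ∈ Y
  pr' : ∀ v, v - p v ∈ Z
  px : ∀ v ∈ x, p v ∈ x
  KY : ∀ v, K v ∈ Y
  KS : x ⊓ Y ≤ (x ⊓ Z).map K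
  KZ : Y ≤ Z.map K

/-- the abelian group acting -/
structure hmG (x Z : Submodule F V) (Θ : V →ₗ[F] V) : Prop where
  rg : ∀ v, Θ v ∈ Z
  kz : ∀ z ∈ Z, Θ z = 0
  kx : ∀ v ∈ x, Θ v ∈ x

/-- the action -/
def hmA (Θ : V →ₗ[F] V) (y : Submodule F V) : Submodule F V := y.map (LinearMap.id + Θ)

variable {x Y Z : Submodule F V} {p K : V →ₗ[F] V} {Θ Θ' : V →ₗ[F] V}

lemma hmG.zero : hmG x Z 0 :=
  ⟨fun _ => Z.zero_mem, fun _ _ => rfl, fun _ _ => x.zero_mem⟩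

lemma hmG.add (h : hmG x Z Θ) (h' : hmG x Z Θ') : hmG x Z (Θ + Θ') :=
  ⟨fun v => Z.add_mem (h.rg v) (h'.rg v),
   fun z hz => by rw [LinearMap.add_apply, h.kz z hz, h'.kz z hz, add_zero],
   fun v hv => x.add_mem (h.kx v hv) (h'.kx v hv)⟩

lemma hmG.neg (h : hmG x Z Θ) : hmG x Z (-Θ) :=
  ⟨fun v => Z.neg_mem (h.rg v),
   fun z hz => by rw [LinearMap.neg_apply, h.kz z hz, neg_zero],
   fun v hv => x.neg_mem (h.kx v hv)⟩

lemma hmA_zero (y : Submodule F V) : hmA 0 y = y := by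
  unfold hmA; rw [add_zero, Submodule.map_id]

lemma hmA_add (h : hmG x Z Θ) (h' : hmG x Z Θ') (y : Submodule F V) :
    hmA Θ (hmA Θ' y) = hmA (Θ + Θ') y := by
  unfold hmA
  rw [← Submodule.map_comp]
  congr 1
  ext v
  simp only [LinearMap.comp_apply, LinearMap.add_apply, LinearMap.id_apply, map_add,
    h.kz _ (h'.rg v)]
  abel

lemma hmA_neg (h : hmG x Z Θ) (y : Submodule F V) : hmA (-Θ) (hmA Θ y) = y := by
  rw [hmA_add h.neg h, neg_add_cancel, hmA_zero]

lemma hmA_neg' (h : hmG x Z Θ) (y : Submodule F V) : hmA Θ (hmA (-Θ) y) = y := by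
  rw [hmA_add h h.neg, add_neg_cancel, hmA_zero]

lemma hmA_mono {y z : Submodule F V} (hyz : y ≤ z) : hmA Θ y ≤ hmA Θ z := Submodule.map_mono hyz

lemma hmA_le (h : hmG x Z Θ) {y z : Submodule F V} : hmA Θ y ≤ hmA Θ z ↔ y ≤ z := by
  refine ⟨fun hyz => ?_, hmA_mono⟩
  have := hmA_mono (Θ := -Θ) hyz
  rwa [hmA_neg h, hmA_neg h] at this

lemma hmA_fin (h : hmG x Z Θ) (y : Submodule F V) : finrank F (hmA Θ y) = finrank F y := by
  refine le_antisymm (Submodule.finrank_map_le _ _) ?_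
  conv_lhs => rw [← hmA_neg h y]
  exact Submodule.finrank_map_le _ _

lemma hmA_x (h : hmG x Z Θ) : hmA Θ x = x := by
  refine Submodule.eq_of_le_of_finrank_le ?_ (hmA_fin h x).ge
  rintro _ ⟨v, hv, rfl⟩
  exact x.add_mem hv (h.kx v hv)

lemma hmA_inf (h : hmG x Z Θ) (y : Submodule F V) : x ⊓ hmA Θ y = hmA Θ (x ⊓ y) := by
  apply le_antisymm
  · have h1 : hmA (-Θ) (x ⊓ hmA Θ y) ≤ x ⊓ y := by
      refine le_inf ?_ ?_
      · conv_rhs => rw [← hmA_x h.neg]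
        exact hmA_mono inf_le_left
      · conv_rhs => rw [← hmA_neg h y]
        exact hmA_mono inf_le_right
    have h2 := hmA_mono (Θ := Θ) h1
    rwa [hmA_neg' h] at h2
  · refine le_inf ?_ (hmA_mono inf_le_right)
    conv_rhs => rw [← hmA_x h]
    exact hmA_mono inf_le_left

lemma hmA_finx (h : hmG x Z Θ) (y : Submodule F V) :
    finrank F ↥(x ⊓ hmA Θ y) = finrank F ↥(x ⊓ y) := by
  rw [hmA_inf h, hmA_fin h]

variable (F) in
/-- a nontrivial additive character -/
noncomputable def hmchi : AddChar F ℂ := AddChar.FiniteField.primitiveChar_to_Complex F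

lemma hm_chi_ne {s : F} (hs : s ≠ 0) : ∃ r : F, hmchi F (r * s) ≠ 1 := by
  have := AddChar.FiniteField.primitiveChar_to_Complex_isPrimitive F hs
  rw [AddChar.ne_one_iff] at this
  obtain ⟨r, hr⟩ := this
  rw [AddChar.mulShift_apply] at hr
  exact ⟨r, by rwa [mul_comm]⟩

/-- the character of the group -/
noncomputable def hmlam (K Θ : V →ₗ[F] V) : ℂ := hmchi F (LinearMap.trace F V (K ∘ₗ Θ))

lemma hmlam_add : hmlam K (Θ + Θ') = hmlam K Θ * hmlam K Θ' := by
  unfold hmlam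
  rw [LinearMap.comp_add, map_add, AddChar.map_add_eq_mul]

lemma hmlam_zero : hmlam K (0 : V →ₗ[F] V) = 1 := by
  unfold hmlam
  rw [LinearMap.comp_zero, map_zero, AddChar.map_zero_eq_one]

lemma hmlam_of_comp (h : K ∘ₗ Θ = 0) : hmlam K Θ = 1 := by
  unfold hmlam
  rw [h, map_zero, AddChar.map_zero_eq_one]

lemma hmlam_rank1 (β : V →ₗ[F] F) (v : V) : hmlam K (β.smulRight v) = hmchi F (β (K v)) := by
  unfold hmlam
  have : K ∘ₗ β.smulRight v = β.smulRight (K v) := by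
    ext u; simp
  rw [this, LinearMap.trace_smulRight]

variable (x Z K) in
/-- weight functions -/
def hmWt (f : Submodule F V → ℂ) : Prop :=
  ∀ Θ, hmG x Z Θ → ∀ y, f (hmA Θ y) = hmlam K Θ * f y

lemma hm_stab {f : Submodule F V → ℂ} (hf : hmWt x Z K f) {y : Submodule F V} (hy : f y ≠ 0)
    (h : hmG x Z Θ) (hs : hmA Θ y = y) : hmlam K Θ = 1 := by
  have := hf Θ h y
  rw [hs] at this
  exact (mul_eq_right₀ hy).1 this.symm

/-- main vanishing lemma -/
lemma hm_key (hS : hmSetup x Y Z p K) {f : Submodule F V → ℂ} (hf : hmWt x Z K f)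
    {y : Submodule F V} (hy : f y ≠ 0) {v : V} (hv : v ∈ Z) (β : V →ₗ[F] F)
    (hβy : ∀ u ∈ y, β (p u) = 0 ∨ v ∈ y) (hx : v ∈ x ∨ ∀ u ∈ x, β (p u) = 0) :
    β (K v) = 0 := by
  by_contra h0
  obtain ⟨r, hr⟩ := hm_chi_ne h0
  have hG : hmG x Z ((β ∘ₗ p).smulRight (r • v)) := by
    refine ⟨fun u => ?_, fun z hz => ?_, fun u hu => ?_⟩
    · exact Z.smul_mem _ (Z.smul_mem _ hv)
    · simp [hS.pZ z hz]
    · rcases hx with hx | hx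
      · exact x.smul_mem _ (x.smul_mem _ hx)
      · simp [hx u hu]
  have hs : hmA ((β ∘ₗ p).smulRight (r • v)) y = y := by
    refine Submodule.eq_of_le_of_finrank_le ?_ (hmA_fin hG y).ge
    rintro _ ⟨u, hu, rfl⟩
    refine y.add_mem hu ?_
    rcases hβy u hu with h1 | h1
    · simp [h1]
    · exact y.smul_mem _ (y.smul_mem _ h1)
  have h1 := hm_stab hf hy hG hs
  rw [hmlam_rank1] at h1
  apply hr
  rw [← h1, map_smul, map_smul, LinearMap.comp_apply, hS.pY _ (hS.KY v), smul_eq_mul]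

lemma hm_wt_supp (hS : hmSetup x Y Z p K) {f : Submodule F V → ℂ} (hf : hmWt x Z K f)
    {y : Submodule F V} (hy : f y ≠ 0) : Y ≤ y.map p := by
  have h1 : x ⊓ Y ≤ y.map p := by
    intro s hs
    obtain ⟨t, ht, rfl⟩ := hS.KS hs
    by_contra h0
    obtain ⟨β, hβ, hker⟩ := Submodule.exists_le_ker_of_notMem h0
    exact hβ (hm_key hS hf hy ht.2 β (fun u hu => Or.inl (hker ⟨u, hu, rfl⟩)) (Or.inl ht.1))
  intro s hs
  obtain ⟨t, ht, rfl⟩ := hS.KZ hs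
  by_contra h0
  obtain ⟨β, hβ, hker⟩ := Submodule.exists_le_ker_of_notMem h0
  exact hβ (hm_key hS hf hy ht β (fun u hu => Or.inl (hker ⟨u, hu, rfl⟩))
    (Or.inr fun u hu => hker (h1 ⟨hS.px u hu, hS.pr u⟩)))

/-- orbit lemma -/
lemma hm_orbit (hS : hmSetup x Y Z p K) {z : Submodule F V} (hd : finrank F z = finrank F Y)
    (hX : finrank F ↥(x ⊓ z) = finrank F ↥(x ⊓ Y)) (hp : Y ≤ z.map p) :
    ∃ Θ, hmG x Z Θ ∧ z = hmA Θ Y ∧ ∀ v, Θ v ∈ Y ⊔ z := by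
  let P : z →ₗ[F] Y := (p.domRestrict z).codRestrict Y (fun v => hS.pr v)
  have hsurj : Function.Surjective P := by
    rintro ⟨y, hy⟩
    obtain ⟨v, hv, hvy⟩ := hp hy
    exact ⟨⟨v, hv⟩, Subtype.ext hvy⟩
  have hinj : Function.Injective P :=
    (LinearMap.injective_iff_surjective_of_finrank_eq_finrank hd).2 hsurj
  let e : z ≃ₗ[F] Y := LinearEquiv.ofBijective P ⟨hinj, hsurj⟩
  let p' : V →ₗ[F] Y := p.codRestrict Y hS.pr
  let s : V →ₗ[F] V := z.subtype ∘ₗ e.symm.toLinearMap ∘ₗ p'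
  have hs1 : ∀ v, s v ∈ z := fun v => (e.symm (p' v)).2
  have hs2 : ∀ v, p (s v) = p v := by
    intro v
    have := congrArg Subtype.val (e.apply_symm_apply (p' v))
    exact this
  have hs3 : ∀ u ∈ z, s u = u := by
    intro u hu
    have : e.symm (p' u) = ⟨u, hu⟩ := by
      rw [LinearEquiv.symm_apply_eq]; rfl
    change ((e.symm (p' u)) : V) = u
    rw [this]
  have hs4 : ∀ v, s (p v) = s v := by
    intro v
    have : p' (p v) = p' v := Subtype.ext (hS.pY _ (hS.pr v))
    change ((e.symm (p' (p v))) : V) = (e.symm (p' v) : V)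
    rw [this]
  -- intersection with x
  have hxz : (x ⊓ z).map p = x ⊓ Y := by
    refine Submodule.eq_of_le_of_finrank_le ?_ ?_
    · rintro _ ⟨u, hu, rfl⟩
      exact ⟨hS.px u hu.1, hS.pr u⟩
    · have : x ⊓ z ≤ ((x ⊓ z).map p).map s := by
        intro u hu
        exact ⟨p u, ⟨u, hu, rfl⟩, by rw [hs4, hs3 u hu.2]⟩
      rw [← hX]
      exact (Submodule.finrank_mono this).trans (Submodule.finrank_map_le _ _)
  have hsx : ∀ v ∈ x, s v ∈ x := by
    intro v hv
    have h1 : p v ∈ (x ⊓ z).map p := by rw [hxz]; exact ⟨hS.px v hv, hS.pr v⟩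
    obtain ⟨u, hu, huv⟩ := h1
    rw [← hs4 v, ← huv, hs4, hs3 u hu.2]
    exact hu.1
  refine ⟨s - p, ⟨fun v => ?_, fun v hv => ?_, fun v hv => ?_⟩, ?_, fun v => ?_⟩
  · have := hS.pr' (s v)
    rwa [hs2] at this
  · rw [LinearMap.sub_apply, ← hs4, hS.pZ v hv, map_zero, sub_zero]
  · exact x.sub_mem (hsx v hv) (hS.px v hv)
  · apply le_antisymm
    · intro u hu
      refine ⟨p u, hS.pr u, ?_⟩
      simp only [LinearMap.add_apply, LinearMap.id_apply, LinearMap.sub_apply]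
      rw [hs4, hs3 u hu, hS.pY _ (hS.pr u)]
      abel
    · rintro _ ⟨y, hy, rfl⟩
      simp only [LinearMap.add_apply, LinearMap.id_apply, LinearMap.sub_apply]
      rw [hS.pY y hy, add_sub_cancel]
      exact hs1 y
  · exact Submodule.sub_mem _ (Submodule.mem_sup_right (hs1 v)) (Submodule.mem_sup_left (hS.pr v))

/-- injectivity of the orbit map -/
lemma hm_orbit_inj (hS : hmSetup x Y Z p K) (h : hmG x Z Θ) (h' : hmG x Z Θ')
    (he : hmA Θ Y = hmA Θ' Y) : Θ = Θ' := by
  have h1 : hmA (-Θ' + Θ) Y = Y := by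
    rw [← hmA_add h'.neg h, he, hmA_neg h']
  have hG := h'.neg.add h
  have h2 : ∀ y ∈ Y, (-Θ' + Θ) y = 0 := by
    intro y hy
    have h3 : y + (-Θ' + Θ) y ∈ hmA (-Θ' + Θ) Y := ⟨y, hy, rfl⟩
    rw [h1] at h3
    have h4 : (-Θ' + Θ) y ∈ Y := by
      have := Y.sub_mem h3 hy
      rwa [add_sub_cancel_left] at this
    rw [← hS.pY _ h4, hS.pZ _ (hG.rg y)]
  have h5 : -Θ' + Θ = 0 := by
    ext v
    have h6 : v = p v + (v - p v) := by abel
    rw [h6, map_add, h2 _ (hS.pr v), hG.kz _ (hS.pr' v), add_zero]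
    rfl
  rw [neg_add_eq_zero] at h5
  exact h5.symm

open Classical in
variable (x Y Z K) in
/-- the highest weight vector -/
noncomputable def hmw (z : Submodule F V) : ℂ :=
  if h : ∃ Θ, hmG x Z Θ ∧ z = hmA Θ Y then hmlam K h.choose else 0

lemma hmw_orb (hS : hmSetup x Y Z p K) (h : hmG x Z Θ) : hmw x Y Z K (hmA Θ Y) = hmlam K Θ := by
  have hex : ∃ Θ', hmG x Z Θ' ∧ hmA Θ Y = hmA Θ' Y := ⟨Θ, h, rfl⟩
  unfold hmw
  rw [dif_pos hex]
  congr 1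
  exact (hm_orbit_inj hS h hex.choose_spec.1 hex.choose_spec.2).symm

lemma hmw_Y (hS : hmSetup x Y Z p K) : hmw x Y Z K Y = 1 := by
  have := hmw_orb hS hmG.zero
  rwa [hmA_zero, hmlam_zero] at this

lemma hmw_ne {z : Submodule F V} (h : hmw x Y Z K z ≠ 0) : ∃ Θ, hmG x Z Θ ∧ z = hmA Θ Y := by
  by_contra h0
  unfold hmw at h
  rw [dif_neg h0] at h
  exact h rfl

lemma hmw_wt (hS : hmSetup x Y Z p K) : hmWt x Z K (hmw x Y Z K) := by
  intro Θ h z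
  by_cases hz : ∃ Θ', hmG x Z Θ' ∧ z = hmA Θ' Y
  · obtain ⟨Θ', h', rfl⟩ := hz
    rw [hmA_add h h', hmw_orb hS (h.add h'), hmw_orb hS h', hmlam_add]
  · have h1 : hmw x Y Z K z = 0 := by
      by_contra h2; exact hz (hmw_ne h2)
    rw [h1, mul_zero]
    by_contra h2
    obtain ⟨Θ', h', he⟩ := hmw_ne h2
    apply hz
    refine ⟨-Θ + Θ', h.neg.add h', ?_⟩
    rw [← hmA_add h.neg h', ← he, hmA_neg h]

/-- weight functions on the component of `Y` are multiples of `hmw` -/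
lemma hm_wt_unique (hS : hmSetup x Y Z p K) {f : Submodule F V → ℂ} (hf : hmWt x Z K f)
    (hh : ∀ z, f z ≠ 0 → finrank F z = finrank F Y ∧ finrank F ↥(x ⊓ z) = finrank F ↥(x ⊓ Y)) :
    f = f Y • hmw x Y Z K := by
  ext z
  rw [Pi.smul_apply, smul_eq_mul]
  by_cases hz : ∃ Θ', hmG x Z Θ' ∧ z = hmA Θ' Y
  · obtain ⟨Θ', h', rfl⟩ := hz
    rw [hf Θ' h', hmw_orb hS h', mul_comm]
  · have h1 : hmw x Y Z K z = 0 := by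
      by_contra h2; exact hz (hmw_ne h2)
    rw [h1, mul_zero]
    by_contra h2
    obtain ⟨h3, h4⟩ := hh z h2
    obtain ⟨Θ, h5, h6, _⟩ := hm_orbit hS h3 h4 (hm_wt_supp hS hf h2)
    exact hz ⟨Θ, h5, h6⟩

end Weights

section HighestWeight

open Matrix

variable {F : Type} [Field F] [Fintype F] {a b : ℕ}
variable {x Y Z : Submodule F (Fin (a + b) → F)}
variable {p K : (Fin (a + b) → F) →ₗ[F] (Fin (a + b) → F)}

/-- invariant matrices preserve weight functions -/
lemma hm_wt_mulVec (M : Matrix (Submodule F (Fin (a + b) → F)) (Submodule F (Fin (a + b) → F)) ℂ)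
    (hM : ∀ Θ, hmG x Z Θ → ∀ y z, M (hmA Θ y) (hmA Θ z) = M y z)
    {f : Submodule F (Fin (a + b) → F) → ℂ} (hf : hmWt x Z K f) : hmWt x Z K (M *ᵥ f) := by
  intro Θ h y
  change ∑ z, M (hmA Θ y) z * f z = hmlam K Θ * ∑ z, M y z * f z
  let e : Submodule F (Fin (a + b) → F) ≃ Submodule F (Fin (a + b) → F) :=
    ⟨hmA Θ, hmA (-Θ), hmA_neg h, hmA_neg' h⟩
  rw [← Equiv.sum_comp e, Finset.mul_sum]
  refine Finset.sum_congr rfl fun z _ => ?_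
  change M (hmA Θ y) (hmA Θ z) * f (hmA Θ z) = _
  rw [hM Θ h, hf Θ h]
  ring

lemma hm_wtL1 {f : Submodule F (Fin (a + b) → F) → ℂ} (hf : hmWt x Z K f) :
    hmWt x Z K (Lone F a b x *ᵥ f) := by
  refine hm_wt_mulVec _ (fun Θ h y z => ?_) hf
  have e : (hmA Θ y ≤ hmA Θ z ∧ finrank F (hmA Θ y) + 1 = finrank F (hmA Θ z) ∧
      finrank F ↥(x ⊓ hmA Θ y) + 1 = finrank F ↥(x ⊓ hmA Θ z)) ↔
      (y ≤ z ∧ finrank F y + 1 = finrank F z ∧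
      finrank F ↥(x ⊓ y) + 1 = finrank F ↥(x ⊓ z)) := by
    rw [hmA_le h, hmA_fin h, hmA_fin h, hmA_finx h, hmA_finx h]
  unfold Lone
  by_cases c : (y ≤ z ∧ finrank F y + 1 = finrank F z ∧
      finrank F ↥(x ⊓ y) + 1 = finrank F ↥(x ⊓ z))
  · rw [if_pos c, if_pos (e.2 c)]
  · rw [if_neg c, if_neg (fun h => c (e.1 h))]

lemma hm_wtL2 {f : Submodule F (Fin (a + b) → F) → ℂ} (hf : hmWt x Z K f) :
    hmWt x Z K (Ltwo F a b x *ᵥ f) := by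
  refine hm_wt_mulVec _ (fun Θ h y z => ?_) hf
  have e : (hmA Θ y ≤ hmA Θ z ∧ finrank F (hmA Θ y) + 1 = finrank F (hmA Θ z) ∧
      finrank F ↥(x ⊓ hmA Θ y) = finrank F ↥(x ⊓ hmA Θ z)) ↔
      (y ≤ z ∧ finrank F y + 1 = finrank F z ∧
      finrank F ↥(x ⊓ y) = finrank F ↥(x ⊓ z)) := by
    rw [hmA_le h, hmA_fin h, hmA_fin h, hmA_finx h, hmA_finx h]
  unfold Ltwo
  by_cases c : (y ≤ z ∧ finrank F y + 1 = finrank F z ∧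
      finrank F ↥(x ⊓ y) = finrank F ↥(x ⊓ z))
  · rw [if_pos c, if_pos (e.2 c)]
  · rw [if_neg c, if_neg (fun h => c (e.1 h))]

lemma hm_wtR1 {f : Submodule F (Fin (a + b) → F) → ℂ} (hf : hmWt x Z K f) :
    hmWt x Z K (Rone F a b x *ᵥ f) := by
  refine hm_wt_mulVec _ (fun Θ h y z => ?_) hf
  have e : (hmA Θ z ≤ hmA Θ y ∧ finrank F (hmA Θ z) + 1 = finrank F (hmA Θ y) ∧
      finrank F ↥(x ⊓ hmA Θ z) + 1 = finrank F ↥(x ⊓ hmA Θ y)) ↔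
      (z ≤ y ∧ finrank F z + 1 = finrank F y ∧
      finrank F ↥(x ⊓ z) + 1 = finrank F ↥(x ⊓ y)) := by
    rw [hmA_le h, hmA_fin h, hmA_fin h, hmA_finx h, hmA_finx h]
  unfold Rone
  by_cases c : (z ≤ y ∧ finrank F z + 1 = finrank F y ∧
      finrank F ↥(x ⊓ z) + 1 = finrank F ↥(x ⊓ y))
  · rw [if_pos c, if_pos (e.2 c)]
  · rw [if_neg c, if_neg (fun h => c (e.1 h))]

lemma hmw_dims (hS : hmSetup x Y Z p K) {z} (h : hmw x Y Z K z ≠ 0) :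
    finrank F z = finrank F Y ∧ finrank F ↥(x ⊓ z) = finrank F ↥(x ⊓ Y) := by
  obtain ⟨Θ, hΘ, rfl⟩ := hmw_ne h
  exact ⟨hmA_fin hΘ Y, hmA_finx hΘ Y⟩

lemma hmw_L1 (hS : hmSetup x Y Z p K) : Lone F a b x *ᵥ hmw x Y Z K = 0 := by
  ext y
  by_contra hy
  have h1 := hm_wt_supp hS (hm_wtL1 (hmw_wt hS)) hy
  obtain ⟨z, h2, h3⟩ := hm_mv_ne hy
  have h4 := hmw_dims hS h3
  simp only [Lone, ne_eq, ite_eq_right_iff, one_ne_zero, imp_false, not_not] at h2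
  have h5 := (Submodule.finrank_mono h1).trans (Submodule.finrank_map_le p y)
  omega

lemma hmw_L2 (hS : hmSetup x Y Z p K) : Ltwo F a b x *ᵥ hmw x Y Z K = 0 := by
  ext y
  by_contra hy
  have h1 := hm_wt_supp hS (hm_wtL2 (hmw_wt hS)) hy
  obtain ⟨z, h2, h3⟩ := hm_mv_ne hy
  have h4 := hmw_dims hS h3
  simp only [Ltwo, ne_eq, ite_eq_right_iff, one_ne_zero, imp_false, not_not] at h2
  have h5 := (Submodule.finrank_mono h1).trans (Submodule.finrank_map_le p y)
  omega

/-- structure of upper covers of `Y` inside `Y ⊔ x` -/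
lemma hm_cover (hS : hmSetup x Y Z p K) {u : Submodule F (Fin (a + b) → F)} (h1 : Y ≤ u)
    (h2 : u ≤ Y ⊔ x) : u ⊓ Z ≤ x ∧ Y ⊔ (u ⊓ Z) = u := by
  constructor
  · rintro v ⟨hv, hvz⟩
    obtain ⟨y, hy, w, hw, rfl⟩ := Submodule.mem_sup.1 (h2 hv)
    have h3 := hS.pZ _ hvz
    rw [map_add, hS.pY y hy, add_eq_zero_iff_eq_neg] at h3
    rw [h3]
    exact x.add_mem (x.neg_mem (hS.px w hw)) hw
  · apply le_antisymm (sup_le h1 inf_le_left)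
    intro v hv
    have : v = p v + (v - p v) := by abel
    rw [this]
    exact Submodule.add_mem_sup (hS.pr v) ⟨u.sub_mem hv (h1 (hS.pr v)), hS.pr' v⟩

/-- vanishing of `R₁ w` on the bad covers -/
lemma hm_cover_van (hS : hmSetup x Y Z p K) {f : Submodule F (Fin (a + b) → F) → ℂ}
    (hf : hmWt x Z K f) {u : Submodule F (Fin (a + b) → F)} (h1 : Y ≤ u)
    (h2 : u ≤ Y ⊔ x) (hu : f u ≠ 0) : u ≤ Y ⊔ (x ⊓ Z ⊓ LinearMap.ker K) := by
  obtain ⟨h3, h4⟩ := hm_cover hS h1 h2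
  conv_lhs => rw [← h4]
  refine sup_le_sup_left ?_ _
  intro t ht
  refine ⟨⟨h3 ht, ht.2⟩, ?_⟩
  by_contra h0
  have h5 : K t ∉ (⊥ : Submodule F (Fin (a + b) → F)) := fun h => h0 h
  obtain ⟨β, hβ, _⟩ := Submodule.exists_le_ker_of_notMem h5
  exact hβ (hm_key hS hf hu ht.2 β (fun _ _ => Or.inr ht.1) (Or.inl (h3 ht)))

/-- value of `R₁ w` on the good covers -/
lemma hm_cover_val (hS : hmSetup x Y Z p K) {u : Submodule F (Fin (a + b) → F)} (h1 : Y ≤ u)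
    (h2 : u ≤ Y ⊔ (x ⊓ Z ⊓ LinearMap.ker K)) (hd : finrank F Y + 1 = finrank F u) :
    (Rone F a b x *ᵥ hmw x Y Z K) u = (Fintype.card F : ℂ) ^ finrank F Y := by
  classical
  have h2x : u ≤ Y ⊔ x := h2.trans (sup_le_sup_left (inf_le_left.trans inf_le_left) _)
  obtain ⟨h3, h4⟩ := hm_cover hS h1 h2x
  have hXu := ((hm_upset x Y u).2 ⟨h1, h2x, hd⟩).2.2
  have hYZ : Y ⊓ Z = ⊥ := by
    rw [eq_bot_iff]
    rintro v ⟨hv, hvz⟩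
    rw [Submodule.mem_bot, ← hS.pY v hv, hS.pZ v hvz]
  have hdim : finrank F ↥(u ⊓ Z) = 1 := by
    have := Submodule.finrank_sup_add_finrank_inf_eq Y (u ⊓ Z)
    rw [h4] at this
    have h5 : Y ⊓ (u ⊓ Z) = ⊥ := by
      rw [eq_bot_iff, ← hYZ]
      exact inf_le_inf_left _ inf_le_right
    rw [h5, finrank_bot] at this
    omega
  have hker : u ⊓ Z ≤ LinearMap.ker K := by
    rintro v ⟨hv, hvz⟩
    obtain ⟨y, hy, t, ht, rfl⟩ := Submodule.mem_sup.1 (h2 hv)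
    have h5 := hS.pZ _ hvz
    rw [map_add, hS.pY y hy, hS.pZ t ht.1.2, add_zero] at h5
    rw [h5, zero_add]
    exact ht.2
  have hterm : ∀ z, Rone F a b x u z * hmw x Y Z K z =
      if z ≤ u ∧ finrank F z + 1 = finrank F u ∧ ¬ (u ⊓ Z ≤ z) then 1 else 0 := by
    intro z
    by_cases hz : z ≤ u ∧ finrank F z + 1 = finrank F u
    · obtain ⟨hz1, hz2⟩ := hz
      by_cases hz3 : u ⊓ Z ≤ z
      · rw [if_neg (fun h => h.2.2 hz3)]
        by_cases hw : hmw x Y Z K z = 0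
        · rw [hw, mul_zero]
        · exfalso
          have h5 := hm_wt_supp hS (hmw_wt hS) hw
          have h6 := hmw_dims hS hw
          have h7 := (p.domRestrict z).finrank_range_add_finrank_ker
          have h8 : LinearMap.range (p.domRestrict z) = z.map p := by
            rw [LinearMap.range_domRestrict]
          rw [h8] at h7
          have h9 := Submodule.finrank_mono h5
          have h10 : finrank F (LinearMap.ker (p.domRestrict z)) = 0 := by omega
          rw [Submodule.finrank_eq_zero] at h10
          have h11 : u ⊓ Z = ⊥ := by
            rw [eq_bot_iff]
            intro v hv
            have h12 : (⟨v, hz3 hv⟩ : z) ∈ LinearMap.ker (p.domRestrict z) := by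
              rw [LinearMap.mem_ker, LinearMap.domRestrict_apply]
              exact hS.pZ v hv.2
            rw [h10, Submodule.mem_bot] at h12
            exact congrArg Subtype.val h12
          rw [h11, finrank_bot] at hdim
          omega
      · rw [if_pos ⟨hz1, hz2, hz3⟩]
        have hXz : finrank F ↥(x ⊓ z) + 1 = finrank F ↥(x ⊓ u) := by
          have e1 := hm_bmono x hz1
          have f1 := hm_xmono x hz1
          by_contra h6
          apply hz3
          have h7 : x ⊓ z = x ⊓ u :=
            Submodule.eq_of_le_of_finrank_le (inf_le_inf_left x hz1) (by omega)
          have h8 : u ⊓ Z ≤ x ⊓ u := le_inf h3 inf_le_left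
          rw [← h7] at h8
          exact h8.trans inf_le_right
        have hzu : z ⊔ (u ⊓ Z) = u := by
          refine Submodule.eq_of_le_of_finrank_le (sup_le hz1 inf_le_left) ?_
          have : z < z ⊔ (u ⊓ Z) := left_lt_sup.2 hz3
          have := Submodule.finrank_lt_finrank_of_lt this
          omega
        have hYz : Y ≤ z.map p := by
          have h5 : u.map p ≤ z.map p := by
            conv_lhs => rw [← hzu]
            rw [Submodule.map_sup, sup_le_iff]
            refine ⟨le_rfl, ?_⟩
            rintro _ ⟨v, hv, rfl⟩
            rw [hS.pZ v hv.2]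
            exact Submodule.zero_mem _
          intro y hy
          exact h5 ⟨y, h1 hy, hS.pY y hy⟩
        obtain ⟨Θ, hΘ, hzΘ, hr⟩ := hm_orbit hS (by omega) (by omega) hYz
        have hR : Rone F a b x u z = 1 := by
          unfold Rone
          rw [if_pos ⟨hz1, hz2, hXz⟩]
        rw [hR, one_mul, hzΘ, hmw_orb hS hΘ]
        apply hmlam_of_comp
        refine LinearMap.ext fun v => ?_
        exact hker ⟨(sup_le h1 hz1) (hr v), hΘ.rg v⟩
    · rw [if_neg (fun h => hz ⟨h.1, h.2.1⟩)]
      have hR : Rone F a b x u z = 0 := by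
        unfold Rone
        rw [if_neg (fun h => hz ⟨h.1, h.2.1⟩)]
      rw [hR, zero_mul]
  change ∑ z, Rone F a b x u z * hmw x Y Z K z = _
  simp only [hterm]
  rw [hm_sum_ncard1]
  have c1 := hm_count_downC ⊥ u bot_le
  have c2 := hm_count_downC (u ⊓ Z) u inf_le_left
  rw [← Set.ncard_inter_add_ncard_sdiff_eq_ncard _ {z | u ⊓ Z ≤ z} (Set.toFinite _)] at c1
  have e1 : {z | ⊥ ≤ z ∧ z ≤ u ∧ finrank F z + 1 = finrank F u} ∩ {z | u ⊓ Z ≤ z} =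
    {z | u ⊓ Z ≤ z ∧ z ≤ u ∧ finrank F z + 1 = finrank F u} := by
    ext z; simp only [Set.mem_inter_iff, Set.mem_ofPred_eq, bot_le]; tauto
  have e2 : {z | ⊥ ≤ z ∧ z ≤ u ∧ finrank F z + 1 = finrank F u} \ {z | u ⊓ Z ≤ z} =
    {z | z ≤ u ∧ finrank F z + 1 = finrank F u ∧ ¬ (u ⊓ Z ≤ z)} := by
    ext z; simp only [Set.mem_sdiff, Set.mem_ofPred_eq, bot_le]; tauto
  rw [e1, e2] at c1
  push_cast at c1
  rw [c2, finrank_bot, pow_zero, div_one, hdim] at c1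
  rw [eq_sub_of_add_eq' c1, ← hd]
  have hq := hm_qne (F := F)
  have hq1 := hm_q1ne (F := F)
  push_cast
  rw [pow_succ]
  field_simp
  ring

lemma hmw_eig (hS : hmSetup x Y Z p K) {ν μ ρ : ℕ} (hν : finrank F ↥(x ⊓ Y) = ν)
    (hY : finrank F Y = ν + μ)
    (hK : finrank F ↥(x ⊓ Z ⊓ LinearMap.ker K) + 2 * ν + ρ = a) :
    hmEig x ((Fintype.card F : ℂ) ^ ρ)⁻¹ ν μ (hmw x Y Z K) := by
  have hq := hm_qne (F := F)
  have hq1 := hm_q1ne (F := F)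
  have hom : hmHom x ν μ (hmw x Y Z K) := by
    intro z hz
    have := hmw_dims hS hz
    omega
  refine ⟨hom, ?_⟩
  have h1 : hmT x *ᵥ hmw x Y Z K = Lone F a b x *ᵥ (Rone F a b x *ᵥ hmw x Y Z K) := by
    unfold hmT
    rw [Matrix.sub_mulVec, ← Matrix.mulVec_mulVec, ← Matrix.mulVec_mulVec, hmw_L1 hS,
      Matrix.mulVec_zero, sub_zero]
  have hwt : hmWt x Z K (hmT x *ᵥ hmw x Y Z K) := by
    rw [h1]; exact hm_wtL1 (hm_wtR1 (hmw_wt hS))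
  have h2 := hm_wt_unique hS hwt (fun z hz => by
    have := hm_homT hom z hz
    omega)
  rw [h2]
  congr 1
  rw [h1]
  classical
  have hdisj : Y ⊓ (x ⊓ Z ⊓ LinearMap.ker K) = ⊥ := by
    rw [eq_bot_iff]
    rintro v ⟨hv, hvz⟩
    rw [Submodule.mem_bot, ← hS.pY v hv, hS.pZ v hvz.1.2]
  have hterm : ∀ u, Lone F a b x Y u * (Rone F a b x *ᵥ hmw x Y Z K) u =
      (if Y ≤ u ∧ u ≤ Y ⊔ (x ⊓ Z ⊓ LinearMap.ker K) ∧ finrank F Y + 1 = finrank F u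
        then 1 else 0) * (Fintype.card F : ℂ) ^ finrank F Y := by
    intro u
    by_cases hu : Y ≤ u ∧ u ≤ Y ⊔ (x ⊓ Z ⊓ LinearMap.ker K) ∧ finrank F Y + 1 = finrank F u
    · rw [if_pos hu, hm_cover_val hS hu.1 hu.2.1 hu.2.2]
      congr 1
      unfold Lone
      rw [if_pos]
      exact (hm_upset x Y u).2 ⟨hu.1, hu.2.1.trans (sup_le_sup_left
        (inf_le_left.trans inf_le_left) _), hu.2.2⟩
    · rw [if_neg hu, zero_mul]
      by_cases hL : Lone F a b x Y u = 0
      · rw [hL, zero_mul]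
      · simp only [Lone, ite_eq_right_iff, one_ne_zero, imp_false, not_not] at hL
        have h3 := (hm_upset x Y u).1 hL
        have h4 : (Rone F a b x *ᵥ hmw x Y Z K) u = 0 := by
          by_contra h5
          exact hu ⟨h3.1, hm_cover_van hS (hm_wtR1 (hmw_wt hS)) h3.1 h3.2.1 h5, h3.2.2⟩
        rw [h4, mul_zero]
  change ∑ u, Lone F a b x Y u * (Rone F a b x *ᵥ hmw x Y Z K) u = _
  simp only [hterm]
  rw [← Finset.sum_mul, hm_sum_ncard1, hm_count_upC _ _ le_sup_left]
  have h3 := Submodule.finrank_sup_add_finrank_inf_eq Y (x ⊓ Z ⊓ LinearMap.ker K)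
  rw [hdisj, finrank_bot, add_zero] at h3
  rw [h3, hY]
  generalize finrank F ↥(x ⊓ Z ⊓ LinearMap.ker K) = m at hK
  push_cast
  unfold hmt
  rw [← hK]
  simp only [pow_add, two_mul]
  field_simp

end HighestWeight

section Existence

variable {F : Type} [Field F] {V : Type} [AddCommGroup V] [Module F V]
variable {a b : ℕ}

/-- initial segments of the index set -/
def hmIdx (a b u v : ℕ) : Set (Fin a ⊕ Fin b) :=
  {k | Sum.elim (fun i : Fin a => i.val < u) (fun j : Fin b => j.val < v) k}

lemma hmIdx_inl {u v : ℕ} (i : Fin a) : (Sum.inl i : Fin a ⊕ Fin b) ∈ hmIdx a b u v ↔ i.val < u :=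
  Iff.rfl

lemma hmIdx_inr {u v : ℕ} (j : Fin b) : (Sum.inr j : Fin a ⊕ Fin b) ∈ hmIdx a b u v ↔ j.val < v :=
  Iff.rfl

lemma hmIdx_ncard {u v : ℕ} (hu : u ≤ a) (hv : v ≤ b) : (hmIdx a b u v).ncard = u + v := by
  have h : hmIdx a b u v = Set.range (Sum.map (Fin.castLE hu) (Fin.castLE hv)) := by
    ext k
    rcases k with i | j
    · rw [hmIdx_inl]
      constructor
      · intro h
        exact ⟨Sum.inl ⟨i, h⟩, rfl⟩
      · rintro ⟨k | k, hk⟩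
        · rw [← Sum.inl.inj hk]; exact k.2
        · cases hk
    · rw [hmIdx_inr]
      constructor
      · intro h
        exact ⟨Sum.inr ⟨j, h⟩, rfl⟩
      · rintro ⟨k | k, hk⟩
        · cases hk
        · rw [← Sum.inr.inj hk]; exact k.2
  have hinj : Function.Injective (Sum.map (Fin.castLE hu) (Fin.castLE hv)) :=
    Function.Injective.sumMap (Fin.castLE_injective hu) (Fin.castLE_injective hv)
  rw [h, ← Nat.card_coe_set_eq, Nat.card_range_of_injective hinj]
  simp

variable {ι : Type} (e : Basis ι F V)

lemma hm_sp_fin [Finite ι] (s : Set ι) : finrank F (Submodule.span F (e '' s)) = s.ncard := by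
  classical
  haveI := Fintype.ofFinite ι
  haveI := Fintype.ofFinite (e '' s : Set V)
  rw [finrank_span_set_eq_card (e.linearIndependent.linearIndepOn_id.mono
    (Set.image_subset_range e s)), ← Set.ncard_eq_toFinset_card',
    Set.ncard_image_of_injective _ e.injective]

lemma hm_sp_inf (s t : Set ι) : Submodule.span F (e '' s) ⊓ Submodule.span F (e '' t) =
    Submodule.span F (e '' (s ∩ t)) := by
  ext v
  rw [Submodule.mem_inf, e.mem_span_image, e.mem_span_image, e.mem_span_image,
    Set.subset_inter_iff]

lemma hm_ker_fin [FiniteDimensional F V] (K : V →ₗ[F] V) (T : Submodule F V) :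
    finrank F ↥(T ⊓ LinearMap.ker K) + finrank F (T.map K) = finrank F T := by
  have h := LinearMap.finrank_range_add_finrank_ker (K.domRestrict T)
  rw [LinearMap.range_domRestrict] at h
  have h2 : LinearMap.ker (K.domRestrict T) = (LinearMap.ker K).comap T.subtype := rfl
  rw [h2, ← Submodule.finrank_map_subtype_eq T, Submodule.map_comap_subtype] at h
  omega

lemma hm_setup_exists [Fintype F] (x : Submodule F (Fin (a + b) → F)) (hx : finrank F x = a)
    {ν μ ρ : ℕ}
    (h1 : 2 * ν + ρ ≤ a) (h2 : ρ ≤ μ) (h3 : 2 * μ ≤ b + ρ) :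
    ∃ (Y Z : Submodule F (Fin (a + b) → F))
      (p K : (Fin (a + b) → F) →ₗ[F] (Fin (a + b) → F)), hmSetup x Y Z p K ∧
      finrank F ↥(x ⊓ Y) = ν ∧ finrank F Y = ν + μ ∧
      finrank F ↥(x ⊓ Z ⊓ LinearMap.ker K) + 2 * ν + ρ = a := by
  classical
  obtain ⟨C, hC⟩ := Submodule.exists_isCompl x
  have hCb : finrank F C = b := by
    have := Submodule.finrank_add_eq_of_isCompl hC
    rw [hx, finrank_fin_fun] at this
    omega
  let e : Basis (Fin a ⊕ Fin b) F (Fin (a + b) → F) :=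
    ((finBasisOfFinrankEq F x hx).prod (finBasisOfFinrankEq F C hCb)).map
      (Submodule.prodEquivOfIsCompl x C hC)
  have hxe : x = Submodule.span F (e '' hmIdx a b a 0) := by
    symm
    refine Submodule.eq_of_le_of_finrank_eq ?_ ?_
    · rw [Submodule.span_le]
      rintro _ ⟨i | j, hi, rfl⟩
      · simp [e]
      · exact absurd hi (by rw [hmIdx_inr]; omega)
    · rw [hm_sp_fin, hmIdx_ncard le_rfl (Nat.zero_le _), hx, add_zero]
  clear_value e
  clear hC hCb
  set Y := Submodule.span F (e '' hmIdx a b ν μ) with hYd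
  set Z := Submodule.span F (e '' (hmIdx a b ν μ)ᶜ) with hZd
  let p : (Fin (a + b) → F) →ₗ[F] (Fin (a + b) → F) :=
    e.constr F (fun k => if k ∈ hmIdx a b ν μ then e k else 0)
  let A : ℕ → (Fin (a + b) → F) := fun n => if h : n < a then e (Sum.inl ⟨n, h⟩) else 0
  let B : ℕ → (Fin (a + b) → F) := fun n => if h : n < b then e (Sum.inr ⟨n, h⟩) else 0
  have hA : ∀ n (h : n < a), A n = e (Sum.inl ⟨n, h⟩) := fun n h => dif_pos h
  have hB : ∀ n (h : n < b), B n = e (Sum.inr ⟨n, h⟩) := fun n h => dif_pos h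
  have memA : ∀ n u v, n < u → u ≤ a → A n ∈ Submodule.span F (e '' hmIdx a b u v) := by
    intro n u v hn hu
    rw [hA n (by omega)]
    exact Submodule.subset_span ⟨_, hn, rfl⟩
  have memB : ∀ n u v, n < v → v ≤ b → B n ∈ Submodule.span F (e '' hmIdx a b u v) := by
    intro n u v hn hu
    rw [hB n (by omega)]
    exact Submodule.subset_span ⟨_, hn, rfl⟩
  let f : Fin a ⊕ Fin b → (Fin (a + b) → F) := Sum.elim
    (fun i => if i.val < ν then 0 else if i.val < 2 * ν then A (i.val - ν)
      else if i.val < 2 * ν + ρ then B (i.val - 2 * ν) else 0)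
    (fun j => if j.val < μ then 0 else if j.val + ρ < 2 * μ then B (j.val + ρ - μ) else 0)
  let K : (Fin (a + b) → F) →ₗ[F] (Fin (a + b) → F) := e.constr F f
  have hKe : ∀ k, K (e k) = f k := fun k => e.constr_basis F f k
  have hpe : ∀ k, p (e k) = if k ∈ hmIdx a b ν μ then e k else 0 :=
    fun k => e.constr_basis F _ k
  have hT : x ⊓ Z = Submodule.span F (e '' (hmIdx a b a 0 \ hmIdx a b ν 0)) := by
    rw [hxe, hZd, hm_sp_inf]
    congr 2
    ext k
    rcases k with i | j
    · simp only [Set.mem_inter_iff, Set.mem_compl_iff, Set.mem_sdiff, hmIdx_inl]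
    · simp only [Set.mem_inter_iff, Set.mem_compl_iff, Set.mem_sdiff, hmIdx_inr]
      omega
  have hS : x ⊓ Y = Submodule.span F (e '' (hmIdx a b ν 0)) := by
    rw [hxe, hYd, hm_sp_inf]
    congr 2
    ext k
    rcases k with i | j
    · simp only [Set.mem_inter_iff, hmIdx_inl]
      omega
    · simp only [Set.mem_inter_iff, hmIdx_inr]
      omega
  have hKT : (x ⊓ Z).map K = Submodule.span F (e '' hmIdx a b ν ρ) := by
    apply le_antisymm
    · rw [hT, Submodule.map_span, Submodule.span_le]
      rintro _ ⟨_, ⟨i | j, hi, rfl⟩, rfl⟩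
      · rw [Set.mem_sdiff, hmIdx_inl, hmIdx_inl] at hi
        rw [hKe]
        change (if i.val < ν then 0 else if i.val < 2 * ν then A (i.val - ν)
          else if i.val < 2 * ν + ρ then B (i.val - 2 * ν) else 0) ∈ Submodule.span F _
        split_ifs
        · exact Submodule.zero_mem _
        · exact memA _ _ _ (by omega) (by omega)
        · exact memB _ _ _ (by omega) (by omega)
        · exact Submodule.zero_mem _
      · rw [Set.mem_sdiff, hmIdx_inr] at hi
        omega
    · rw [Submodule.span_le]
      rintro _ ⟨i | j, hi, rfl⟩
      · rw [hmIdx_inl] at hi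
        refine ⟨e (Sum.inl ⟨i + ν, by omega⟩), ?_, ?_⟩
        · rw [hT]
          refine Submodule.subset_span ⟨_, ?_, rfl⟩
          rw [Set.mem_sdiff, hmIdx_inl, hmIdx_inl]
          dsimp only
          omega
        · rw [hKe]
          change (if i.val + ν < ν then 0 else if i.val + ν < 2 * ν then A (i.val + ν - ν)
            else if i.val + ν < 2 * ν + ρ then B (i.val + ν - 2 * ν) else 0) = _
          rw [if_neg (by omega), if_pos (by omega), Nat.add_sub_cancel, hA _ i.2]
      · rw [hmIdx_inr] at hi
        refine ⟨e (Sum.inl ⟨j + 2 * ν, by omega⟩), ?_, ?_⟩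
        · rw [hT]
          refine Submodule.subset_span ⟨_, ?_, rfl⟩
          rw [Set.mem_sdiff, hmIdx_inl, hmIdx_inl]
          dsimp only
          omega
        · rw [hKe]
          change (if j.val + 2 * ν < ν then 0 else if j.val + 2 * ν < 2 * ν then
            A (j.val + 2 * ν - ν) else if j.val + 2 * ν < 2 * ν + ρ then
            B (j.val + 2 * ν - 2 * ν) else 0) = _
          rw [if_neg (by omega), if_neg (by omega), if_pos (by omega), Nat.add_sub_cancel,
            hB _ j.2]
  refine ⟨Y, Z, p, K, ⟨?_, ?_, ?_, ?_, ?_, ?_, ?_, ?_⟩, ?_, ?_, ?_⟩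
  · intro y hy
    have : Set.EqOn p (LinearMap.id : _ →ₗ[F] (Fin (a + b) → F)) (e '' hmIdx a b ν μ) := by
      rintro _ ⟨k, hk, rfl⟩
      rw [hpe, if_pos hk]; rfl
    exact LinearMap.eqOn_span this hy
  · intro y hy
    have : Set.EqOn p (0 : _ →ₗ[F] (Fin (a + b) → F)) (e '' (hmIdx a b ν μ)ᶜ) := by
      rintro _ ⟨k, hk, rfl⟩
      rw [hpe, if_neg hk]; rfl
    exact LinearMap.eqOn_span this hy
  · have : LinearMap.range p ≤ Y := by
      rw [e.constr_range, Submodule.span_le]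
      rintro _ ⟨k, rfl⟩
      dsimp only
      split_ifs with hk
      · exact Submodule.subset_span ⟨k, hk, rfl⟩
      · exact Submodule.zero_mem _
    exact fun v => this ⟨v, rfl⟩
  · intro v
    have : (⊤ : Submodule F (Fin (a + b) → F)) ≤ Z.comap (LinearMap.id - p) := by
      rw [← e.span_eq, Submodule.span_le]
      rintro _ ⟨k, rfl⟩
      change e k - p (e k) ∈ Z
      rw [hpe]
      split_ifs with hk
      · rw [sub_self]; exact Submodule.zero_mem _
      · rw [sub_zero]; exact Submodule.subset_span ⟨k, hk, rfl⟩
    exact this (Submodule.mem_top (x := v))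
  · have : x ≤ x.comap p := by
      conv_lhs => rw [hxe]
      rw [Submodule.span_le]
      rintro _ ⟨k, hk, rfl⟩
      change p (e k) ∈ x
      rw [hpe]
      split_ifs
      · rw [hxe]; exact Submodule.subset_span ⟨k, hk, rfl⟩
      · exact Submodule.zero_mem _
    exact this
  · have : LinearMap.range K ≤ Y := by
      rw [e.constr_range, Submodule.span_le]
      rintro _ ⟨i | j, rfl⟩
      · change (if i.val < ν then 0 else if i.val < 2 * ν then A (i.val - ν)
          else if i.val < 2 * ν + ρ then B (i.val - 2 * ν) else 0) ∈ Submodule.span F _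
        split_ifs
        · exact Submodule.zero_mem _
        · exact memA _ _ _ (by omega) (by omega)
        · exact memB _ _ _ (by omega) (by omega)
        · exact Submodule.zero_mem _
      · change (if j.val < μ then 0 else if j.val + ρ < 2 * μ then B (j.val + ρ - μ) else 0) ∈
          Submodule.span F _
        split_ifs
        · exact Submodule.zero_mem _
        · exact memB _ _ _ (by omega) (by omega)
        · exact Submodule.zero_mem _
    exact fun v => this ⟨v, rfl⟩
  · rw [hS, hKT]
    refine Submodule.span_mono (Set.image_mono ?_)
    rintro (i | j) hk
    · exact hk
    · rw [hmIdx_inr] at hk; omega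
  · have hle : Submodule.span F (e '' hmIdx a b ν ρ) ≤ Z.map K := by
      rw [← hKT]; exact Submodule.map_mono inf_le_right
    rw [hYd, Submodule.span_le]
    rintro _ ⟨i | j, hk, rfl⟩
    · exact hle (Submodule.subset_span ⟨_, hk, rfl⟩)
    · rw [hmIdx_inr] at hk
      by_cases hj : j.val < ρ
      · exact hle (Submodule.subset_span ⟨_, hj, rfl⟩)
      · refine ⟨e (Sum.inr ⟨j + μ - ρ, by omega⟩), ?_, ?_⟩
        · refine Submodule.subset_span ⟨_, ?_, rfl⟩
          rw [Set.mem_compl_iff, hmIdx_inr]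
          dsimp only
          omega
        · rw [hKe]
          change (if j.val + μ - ρ < μ then 0 else if j.val + μ - ρ + ρ < 2 * μ then
            B (j.val + μ - ρ + ρ - μ) else 0) = _
          rw [if_neg (by omega), if_pos (by omega),
            show j.val + μ - ρ + ρ - μ = j.val by omega, hB _ j.2]
  · rw [hS, hm_sp_fin, hmIdx_ncard (by omega) (Nat.zero_le _), add_zero]
  · rw [hYd, hm_sp_fin, hmIdx_ncard (by omega) (by omega)]
  · have c := hm_ker_fin K (x ⊓ Z)
    have d : hmIdx a b ν 0 ⊆ hmIdx a b a 0 := by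
      rintro (i | j) hk
      · exact i.2
      · exact hk
    have c2 := Set.ncard_sdiff_add_ncard_of_subset d (Set.toFinite _)
    rw [hmIdx_ncard (by omega) (Nat.zero_le _), hmIdx_ncard le_rfl (Nat.zero_le _)] at c2
    rw [hKT, hm_sp_fin, hmIdx_ncard (by omega) (by omega)] at c
    have c3 : finrank F ↥(x ⊓ Z) = (hmIdx a b a 0 \ hmIdx a b ν 0).ncard := by
      rw [hT, hm_sp_fin]
    omega

end Existence

open Classical in
/-- there exists a simple `H`-submodule of `ℂP` with lower
endpoint `(ν, μ)` and index `ρ` iff `0 ≤ ν ≤ a`, `0 ≤ μ ≤ b`, and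
`max{0, 2μ-b} ≤ ρ ≤ min{a-2ν, μ}`. -/
theorem exists_simple_H_module_iff (F : Type) [Field F] [Fintype F] (a b : ℕ)
    (x : Submodule F (Fin (a + b) → F)) (hx : finrank F x = a)
    (ν μ : ℕ) (ρ : ℤ) :
    (∃ W : Submodule ℂ (Submodule F (Fin (a + b) → F) → ℂ),
        MatSimple (Halg F a b x) W ∧
        lowNu F a b x W = ν ∧ lowMu F a b x W = μ ∧ idxH F a b x W = ρ)
      ↔ (ν ≤ a ∧ μ ≤ b ∧
          max 0 (2 * (μ : ℤ) - b) ≤ ρ ∧ ρ ≤ min ((a : ℤ) - 2 * ν) (μ : ℤ)) := by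
  constructor
  · rintro ⟨W, hW, rfl, rfl, rfl⟩
    exact hm_forward hx hW
  · rintro ⟨h1, h2, h3, h4⟩
    obtain ⟨h5, h6⟩ := max_le_iff.1 h3
    obtain ⟨h7, h8⟩ := le_min_iff.1 h4
    obtain ⟨r, rfl⟩ := Int.eq_ofNat_of_zero_le h5
    obtain ⟨Y, Z, p, K, hS, c1, c2, c3⟩ :=
      hm_setup_exists (ν := ν) (μ := μ) (ρ := r) x hx (by omega) (by omega) (by omega)
    refine hm_backward hx ?_ (hmw_eig hS c1 c2 c3) (by omega) (hmw_L1 hS) (hmw_L2 hS)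
    intro h0
    have h9 := hmw_Y hS
    rw [h0] at h9
    exact zero_ne_one h9
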